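/- Dual Strichartz estimate in Lorentz spaces (Keel–Tao): let n ≥ 3 and let (q̃, r̃) be an admissible pair, i.e. 2 ≤ q̃ ≤ ∞, 2 ≤ r̃ ≤ 2n/(n−2) and 2/q̃ + n/r̃ = n/2. Then there is a constant C such that for all suitable space–time functions F, ‖ ∫_ℝ e^{−iτΔ} F(·, τ) dτ ‖_{L²(ℝⁿ)} ≤ C ‖F‖_{L^{q̃′}_t(ℝ; L^{r̃′,2}_x)}, where q̃′, r̃′ are the Hölder conjugates of q̃, r̃. -/

import Mathlib

/-!
The proof follows Keel and Tao, with atoms in place of real interpolation.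

The exponents of an admissible pair depend on the single parameter `θ = 2 / q̃ ∈ [0, 1]`
(`exponents`): `1 / r̃' = 1 / 2 + θ / n` and `1 / q̃' = 1 - θ / 2`. By duality it suffices to bound
`∫∫ |F| |e^{iτΔ}g|` by the mixed Lorentz norm of `F` times `‖g‖₂`. This is done for an evolution
regularised by a Gaussian factor `exp (-ε|ξ|²)`, uniformly in `ε`, so that everything converges
absolutely; `duality` removes the regularisation with the lemma of Fatou, testing the time integral
against its own truncations.

For the bilinear bound (`dual_form`), `F(τ)` is cut along the levels `F(τ)*(2^m)` of its
rearrangement, giving pieces on disjoint sets `A_m(τ)` of measure at most `2^{m+1}`. With `s_m(τ)` the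
integral of `|e^{iτΔ}g|` over `A_m(τ)`, two square function bounds are available: at each time,
`∑ₘ (2^{-m/2} s_m)² ≲ ‖g‖₂²` by Cauchy–Schwarz and Plancherel; and, integrated in time,
`∫ ∑ₘ (2^{-m(1/2+1/n)} s_m)² dτ ≲ ‖g‖₂²`, the endpoint estimate `local_endpoint`. Hölder's inequality
with weights `1 - θ` and `θ` combines the two, and the remaining factor is the dyadic form of the
`L^{r̃',2}` norm. Thus the Lorentz refinement and the full range of pairs come from the endpoint.

The endpoint is dual to an estimate for superpositions of evolved atoms (`atomic_strichartz`), which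
is an instance of the Hilbert space statement `keel_tao_abstract`. An atom on a set of measure
`2^k` has natural time scale `2^{2k/n}`. Pairs of times closer than a splitting time are treated by
the `L²` bound, the remaining ones by the dispersive decay `|s - t|^{-n/2}`, which is integrable at
infinity as `n ≥ 3`. For two different scales a splitting time strictly between the two natural ones
makes both parts gain a power of the ratio of the scales (`cross_scale`), so that the sum over all
pairs of scales converges geometrically.

As Bochner integrals are zero when they diverge, `schrod (-τ) (F τ)` vanishes unless `F τ` and its
Fourier transform are both integrable (`schrod_undef`); times without this property are
discarded at the outset.
-/

open MeasureTheory Real FourierTransform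
open scoped ENNReal

noncomputable section

variable {n : ℕ}

/-- The distribution function `|{x : |f x| > λ}|`. -/
def distFn (f : EuclideanSpace ℝ (Fin n) → ℂ) (l : ℝ) : ℝ≥0∞ :=
  volume {x | l < ‖f x‖}

/-- The decreasing rearrangement `f*`. -/
def rearr (f : EuclideanSpace ℝ (Fin n) → ℂ) (t : ℝ) : ℝ :=
  sInf {l : ℝ | 0 < l ∧ distFn f l ≤ ENNReal.ofReal t}

/-- The Lorentz quasinorm `‖f‖_{L^{p,q}}`; the second exponent may be `∞`. -/
def lorentz (p : ℝ) (q : ℝ≥0∞) (f : EuclideanSpace ℝ (Fin n) → ℂ) : ℝ≥0∞ :=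
  if q = ∞ then ⨆ t ∈ Set.Ioi (0:ℝ), ENNReal.ofReal (t ^ (1/p) * rearr f t)
  else (∫⁻ t in Set.Ioi (0:ℝ),
      ENNReal.ofReal (t ^ (1/p) * rearr f t) ^ q.toReal / ENNReal.ofReal t) ^ (1/q.toReal)

/-- The fractional Laplacian `(-Δ)^{s/2}`, the Fourier multiplier with symbol `|ξ|^s`. -/
def fracLap (s : ℝ) (f : EuclideanSpace ℝ (Fin n) → ℂ) : EuclideanSpace ℝ (Fin n) → ℂ :=
  𝓕⁻ (fun ξ => ((‖ξ‖ ^ s : ℝ) : ℂ) * 𝓕 f ξ)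

/-- The Bessel operator `(1-Δ)^{s/2}`, the Fourier multiplier with symbol `(1+|ξ|²)^{s/2}`. -/
def besselOp (s : ℝ) (f : EuclideanSpace ℝ (Fin n) → ℂ) : EuclideanSpace ℝ (Fin n) → ℂ :=
  𝓕⁻ (fun ξ => (((1 + ‖ξ‖ ^ 2) ^ (s/2) : ℝ) : ℂ) * 𝓕 f ξ)

/-- The free Schrödinger propagator `e^{itΔ}`, Fourier multiplier with symbol `e^{-it|ξ|²}`. -/
def schrod (t : ℝ) (f : EuclideanSpace ℝ (Fin n) → ℂ) : EuclideanSpace ℝ (Fin n) → ℂ :=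
  𝓕⁻ (fun ξ => Complex.exp (-Complex.I * t * (‖ξ‖ ^ 2 : ℝ)) * 𝓕 f ξ)

/-- The Riesz kernel `K_α`. -/
def rieszKernel (α : ℝ) (x : EuclideanSpace ℝ (Fin n)) : ℝ :=
  Real.Gamma ((n - α) / 2) /
    (Real.Gamma (α / 2) * Real.pi ^ ((n : ℝ) / 2) * 2 ^ α * ‖x‖ ^ ((n : ℝ) - α))

/-- The Riesz potential `I_α f = K_α ∗ f`. -/
def rieszPot (α : ℝ) (f : EuclideanSpace ℝ (Fin n) → ℂ) (x : EuclideanSpace ℝ (Fin n)) : ℂ :=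
  ∫ y, (rieszKernel α (x - y) : ℂ) * f y

/-- The nonlinearity `F(u) = λ (I_α ∗ |·|^{-b}|u|^p) |x|^{-b} |u|^{p-2} u`. -/
def Fnl (lam α b p : ℝ) (u : EuclideanSpace ℝ (Fin n) → ℂ)
    (x : EuclideanSpace ℝ (Fin n)) : ℂ :=
  lam * rieszPot α (fun y => ((‖y‖ ^ (-b) * ‖u y‖ ^ p : ℝ) : ℂ)) x *
    ((‖x‖ ^ (-b) : ℝ) : ℂ) * ((‖u x‖ ^ (p - 2) : ℝ) : ℂ) * u x

/-- Mixed-norm in time: `‖g‖_{L^q_t(I)}` for an `ℝ≥0∞`-valued `g`. -/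
def timeLp (q : ℝ≥0∞) (I : Set ℝ) (g : ℝ → ℝ≥0∞) : ℝ≥0∞ :=
  if q = ∞ then essSup g (volume.restrict I)
  else (∫⁻ t in I, g t ^ q.toReal) ^ (1/q.toReal)

/-- The `H^s = W^s_{2,2}` norm. -/
def hsNorm (s : ℝ) (f : EuclideanSpace ℝ (Fin n) → ℂ) : ℝ≥0∞ :=
  lorentz 2 2 (besselOp s f)

end

set_option linter.unusedSectionVars false

/-! ### Keel–Tao summation in a Hilbert space -/

section AbstractKeelTao

variable {H : Type*} [NormedAddCommGroup H] [InnerProductSpace ℂ H]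

/-- The truncated decay kernel `|u|^{-σ} 1_{|u| ≥ T}` in the time variable. -/
noncomputable def farKernel (σ T : ℝ) (u : ℝ) : ℝ :=
  Set.indicator {u : ℝ | T ≤ |u|} (fun u => |u| ^ (-σ)) u

lemma farKernel_nonneg (σ T u : ℝ) : 0 ≤ farKernel σ T u := by
  unfold farKernel
  exact Set.indicator_nonneg (fun u _ => by positivity) u

lemma integrable_farKernel {σ T : ℝ} (hσ : 1 < σ) (hT : 0 < T) :
    Integrable (farKernel σ T) ∧ ∫ u, farKernel σ T u = 2 * (T ^ (1 - σ) / (σ - 1)) := by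
  have hI : IntegrableOn (fun t : ℝ => t ^ (-σ)) (Set.Ioi T) :=
    integrableOn_Ioi_rpow_of_lt (by linarith) hT
  have hv := integral_Ioi_rpow_of_lt (a := -σ) (by linarith) hT
  have hset : {u : ℝ | T ≤ |u|} = Set.Iic (-T) ∪ Set.Ici T := by
    ext u; simp only [Set.mem_ofPred_eq, Set.mem_union, Set.mem_Iic, Set.mem_Ici, le_abs]
    constructor
    · rintro (h | h)
      · exact Or.inr h
      · exact Or.inl (by linarith)
    · rintro (h | h)
      · exact Or.inr (by linarith)
      · exact Or.inl h
  have hm : MeasurableSet {u : ℝ | T ≤ |u|} := by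
    rw [hset]; exact measurableSet_Iic.union measurableSet_Ici
  have h1 : IntegrableOn (fun t : ℝ => |t| ^ (-σ)) (Set.Ici T) := by
    rw [integrableOn_Ici_iff_integrableOn_Ioi]
    refine hI.congr_fun (fun t ht => ?_) measurableSet_Ioi
    simp only [abs_of_pos (hT.trans ht)]
  have h1v : ∫ t in Set.Ici T, |t| ^ (-σ) = T ^ (1 - σ) / (σ - 1) := by
    rw [integral_Ici_eq_integral_Ioi]
    rw [setIntegral_congr_fun (g := fun t : ℝ => t ^ (-σ)) measurableSet_Ioi
      (fun t ht => by simp only [abs_of_pos (hT.trans ht)]), hv]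
    rw [show -σ + 1 = 1 - σ by ring, ← neg_sub σ 1, div_neg, neg_div, neg_neg]
  have hneg : ∀ t : ℝ, |(-t)| ^ (-σ) = |t| ^ (-σ) := fun t => by rw [abs_neg]
  have h2 : IntegrableOn (fun t : ℝ => |t| ^ (-σ)) (Set.Iic (-T)) := by
    rw [← integrable_indicator_iff measurableSet_Iic]
    rw [← integrable_indicator_iff measurableSet_Ici] at h1
    refine h1.comp_neg.congr (Filter.Eventually.of_forall fun t => ?_)
    by_cases ht : t ≤ -T
    · have : T ≤ -t := by linarith
      simp [Set.indicator, ht, this]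
    · have : ¬ T ≤ -t := by intro h; exact ht (by linarith)
      simp [Set.indicator, ht, this]
  have h2v : ∫ t in Set.Iic (-T), |t| ^ (-σ) = T ^ (1 - σ) / (σ - 1) := by
    have := integral_comp_neg_Iic (-T) (fun t : ℝ => |t| ^ (-σ))
    simp only [abs_neg, neg_neg] at this
    rw [this, ← integral_Ici_eq_integral_Ioi, h1v]
  constructor
  · unfold farKernel
    change Integrable (Set.indicator {u : ℝ | T ≤ |u|} fun u => |u| ^ (-σ))
    rw [integrable_indicator_iff hm, hset]
    exact h2.union h1
  · unfold farKernel
    rw [integral_indicator hm, hset, setIntegral_union _ measurableSet_Ici h2 h1, h1v, h2v]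
    · ring
    · rw [Set.disjoint_left]
      intro t ht ht'
      simp only [Set.mem_Iic, Set.mem_Ici] at ht ht'
      linarith

/-- The integral over the line as a sum over the windows `(aT, (a+1)T]`, `a ∈ ℤ`. -/
lemma hasSum_windows {E : Type*} [NormedAddCommGroup E] [NormedSpace ℝ E] {T : ℝ} (hT : 0 < T)
    {f : ℝ → E} (hf : Integrable f) :
    HasSum (fun a : ℤ => ∫ s in Set.Ioc (a • T) ((a + 1) • T), f s) (∫ s, f s) := by
  have h := hasSum_integral_iUnion (μ := volume) (f := f)
    (s := fun a : ℤ => Set.Ioc (a • T) ((a + 1) • T))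
    (fun a => measurableSet_Ioc) ?_ hf.integrableOn
  · rwa [iUnion_Ioc_zsmul hT, setIntegral_univ] at h
  · exact Set.pairwise_disjoint_Ioc_zsmul T

/-- A window of triple length is the union of three consecutive windows. -/
lemma integral_triple_window {T : ℝ} (hT : 0 < T) {f : ℝ → ℝ} (hf : Integrable f) (a : ℤ) :
    ∫ s in Set.Ioc (a • T - T) (a • T + 2 * T), f s =
      (∫ s in Set.Ioc ((a - 1) • T) ((a - 1 + 1) • T), f s) +
      (∫ s in Set.Ioc (a • T) ((a + 1) • T), f s) +
      ∫ s in Set.Ioc ((a + 1) • T) ((a + 1 + 1) • T), f s := by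
  simp only [zsmul_eq_mul]
  push_cast
  rw [← intervalIntegral.integral_of_le (by nlinarith),
    ← intervalIntegral.integral_of_le (by nlinarith),
    ← intervalIntegral.integral_of_le (by nlinarith),
    ← intervalIntegral.integral_of_le (by nlinarith)]
  have hi : ∀ x y : ℝ, IntervalIntegrable f volume x y := fun x y => hf.intervalIntegrable
  rw [show ((a : ℝ) - 1 + 1) * T = a * T by ring,
    intervalIntegral.integral_add_adjacent_intervals (hi _ _) (hi _ _),
    intervalIntegral.integral_add_adjacent_intervals (hi _ _) (hi _ _)]
  congr 1 <;> ring

lemma norm_inner_self_sq (x : H) : ‖inner ℂ x x‖ = ‖x‖ ^ 2 := by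
  rw [inner_self_eq_norm_sq_to_K]; simp

/-- Cauchy–Schwarz in time: the bound that ignores all cancellation between different times. -/
lemma crude_window {V : ℝ → H} {c : ℝ → ℝ} {M : ℝ} (hc : Integrable c)
    (hc2 : Integrable fun s => c s ^ 2) (hV : ∀ s, ‖V s‖ ≤ M * c s) {a b : ℝ} (hab : a < b) :
    ‖∫ s in Set.Ioc a b, V s‖ ^ 2 ≤ M ^ 2 * (b - a) * ∫ s in Set.Ioc a b, c s ^ 2 := by
  have h1 : ‖∫ s in Set.Ioc a b, V s‖ ≤ M * ∫ s in Set.Ioc a b, c s := by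
    rw [← integral_const_mul]
    exact norm_integral_le_of_norm_le (hc.const_mul _).integrableOn
      (Filter.Eventually.of_forall hV)
  set x := ∫ s in Set.Ioc a b, c s
  set m := x / (b - a) with hm
  have hba : 0 < b - a := by linarith
  have h2 : 0 ≤ ∫ s in Set.Ioc a b, (c s - m) ^ 2 := integral_nonneg fun s => sq_nonneg _
  have h3 : ∫ s in Set.Ioc a b, (c s - m) ^ 2 =
      (∫ s in Set.Ioc a b, c s ^ 2) - 2 * m * x + m ^ 2 * (b - a) := by
    have : ∀ s, (c s - m) ^ 2 = c s ^ 2 - 2 * m * c s + m ^ 2 := fun s => by ring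
    simp_rw [this]
    rw [integral_add, integral_sub, integral_const_mul]
    · congr 1
      rw [setIntegral_const, smul_eq_mul, mul_comm, Real.volume_real_Ioc_of_le hab.le]
    · exact hc2.integrableOn
    · exact (hc.const_mul _).integrableOn
    · exact (hc2.integrableOn).sub (hc.const_mul _).integrableOn
    · exact integrableOn_const (by simp)
  rw [h3] at h2
  have h4 : x ^ 2 ≤ (b - a) * ∫ s in Set.Ioc a b, c s ^ 2 := by
    have hx : x = m * (b - a) := by rw [hm]; field_simp
    rw [hx] at h2 ⊢
    nlinarith
  calc ‖∫ s in Set.Ioc a b, V s‖ ^ 2 ≤ (M * x) ^ 2 := by gcongr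
    _ = M ^ 2 * x ^ 2 := by ring
    _ ≤ M ^ 2 * ((b - a) * ∫ s in Set.Ioc a b, c s ^ 2) := by gcongr
    _ = _ := by ring

variable [CompleteSpace H]

/-- Splitting of `⟪∫ V, ∫ W⟫` into pairs of times in neighbouring windows of length `T`, which are
controlled by the norms of the integrals over windows, and the remaining pairs, at distance at
least `T`, which are controlled by the pointwise decay of `⟪V s, W t⟫`. -/
lemma near_far {σ T B N N' : ℝ} (hσ : 1 < σ) (hT : 0 < T) (hB : 0 ≤ B) (hN : 0 ≤ N) (hN' : 0 ≤ N')
    {V W : ℝ → H} (hV : Integrable V) (hW : Integrable W) {c d : ℝ → ℝ}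
    (hc : Integrable fun s => c s ^ 2) (hd : Integrable fun s => d s ^ 2)
    (hnV : ∀ a : ℝ, ‖∫ s in Set.Ioc a (a + T), V s‖ ^ 2 ≤
      N ^ 2 * ∫ s in Set.Ioc a (a + T), c s ^ 2)
    (hnW : ∀ a : ℝ, ‖∫ s in Set.Ioc (a - T) (a + 2 * T), W s‖ ^ 2 ≤
      N' ^ 2 * ∫ s in Set.Ioc (a - T) (a + 2 * T), d s ^ 2)
    (hfar : ∀ s t, s ≠ t → ‖inner ℂ (V s) (W t)‖ ≤ B * |s - t| ^ (-σ) * (c s * d t)) :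
    ‖inner ℂ (∫ s, V s) (∫ s, W s)‖ ≤
      (3 / 2 * (N * N') + B * (T ^ (1 - σ) / (σ - 1))) *
        ((∫ s, c s ^ 2) + ∫ s, d s ^ 2) := by
  obtain ⟨hκ, hκv⟩ := integrable_farKernel hσ hT
  set κ := farKernel σ T with hκdef
  have hκc : Integrable fun s => ∫ t, κ t * d (s - t) ^ 2 :=
    hκ.integrable_convolution (ContinuousLinearMap.mul ℝ ℝ) hd
  have hκi : ∫ s, ∫ t, κ t * d (s - t) ^ 2 = (∫ t, κ t) * ∫ t, d t ^ 2 :=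
    integral_convolution (ContinuousLinearMap.mul ℝ ℝ) hκ hd
  have hκae : ∀ᵐ s, Integrable fun t => κ t * d (s - t) ^ 2 :=
    hκ.ae_convolution_exists (ContinuousLinearMap.mul ℝ ℝ) hd
  -- The far interaction is bounded by `κ(s - t) (c s ^ 2 + d t ^ 2) / 2`. Convolution with the
  -- integrable kernel `κ` preserves `L¹`, and `Φ s` is the integral of this bound over all `t`.
  set Φ : ℝ → ℝ := fun s => B / 2 * (c s ^ 2 * (∫ t, κ t) + ∫ t, κ t * d (s - t) ^ 2) with hΦ
  have hΦi : Integrable Φ := ((hc.mul_const _).add hκc).const_mul _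
  have hΦv : ∫ s, Φ s = B / 2 * (∫ t, κ t) * ((∫ s, c s ^ 2) + ∫ s, d s ^ 2) := by
    simp only [hΦ]
    rw [integral_const_mul, integral_add (hc.mul_const _) hκc, hκi, integral_mul_const]
    ring
  have hz : HasSum (fun a : ℤ => inner ℂ (∫ s, W s) (∫ s in Set.Ioc (a • T) ((a + 1) • T), V s))
      (inner ℂ (∫ s, W s) (∫ s, V s)) :=
    (hasSum_windows hT hV).mapL (innerSL ℂ (∫ s, W s))
  have hsc := hasSum_windows hT hc
  have hsd := hasSum_windows hT hd
  have hsd3 : HasSum (fun a : ℤ => ∫ s in Set.Ioc (a • T - T) (a • T + 2 * T), d s ^ 2)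
      ((∫ s, d s ^ 2) + (∫ s, d s ^ 2) + ∫ s, d s ^ 2) := by
    have h1 := (Equiv.subRight (1 : ℤ)).hasSum_iff.2 hsd
    have h2 := (Equiv.addRight (1 : ℤ)).hasSum_iff.2 hsd
    refine ((h1.add hsd).add h2).congr_fun fun a => ?_
    rw [integral_triple_window hT hd a]
    rfl
  have hsΦ := hasSum_windows hT hΦi
  have hr := ((hsc.add hsd3).mul_left (N * N' / 2)).add hsΦ
  have := hz.norm_le_of_bounded hr ?_
  · rw [← inner_conj_symm, RCLike.norm_conj]
    refine this.trans ?_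
    rw [hΦv, hκv]
    have hc0 : 0 ≤ ∫ s, c s ^ 2 := integral_nonneg fun s => sq_nonneg _
    have hd0 : 0 ≤ ∫ s, d s ^ 2 := integral_nonneg fun s => sq_nonneg _
    have := mul_nonneg (mul_nonneg hN hN') hc0
    nlinarith
  intro a
  set I := Set.Ioc (a • T) ((a + 1) • T) with hI
  set J := Set.Ioc (a • T - T) (a • T + 2 * T) with hJ
  have hI' : I = Set.Ioc (a • T) (a • T + T) := by rw [hI, add_smul, one_smul]
  have hsplit : ∫ s, W s = (∫ s in J, W s) + ∫ s in Jᶜ, W s :=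
    (integral_add_compl measurableSet_Ioc hW).symm
  -- For `s` in the window `I`, times `t` in the triple window `J` count as near; those outside `J`
  -- are at distance at least `T` from `s`.
  rw [hsplit, inner_add_left]
  refine (norm_add_le _ _).trans (add_le_add ?_ ?_)
  · have h1 := hnV (a • T)
    rw [← hI'] at h1
    have h2 := hnW (a • T)
    rw [← hJ] at h2
    set x := ‖∫ s in I, V s‖
    set y := ‖∫ s in J, W s‖
    set C := ∫ s in I, c s ^ 2
    set D := ∫ s in J, d s ^ 2
    have hC : 0 ≤ C := integral_nonneg fun s => sq_nonneg _
    have hD : 0 ≤ D := integral_nonneg fun s => sq_nonneg _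
    have hx : x ≤ N * √C := by
      apply le_of_sq_le_sq _ (by positivity)
      rw [mul_pow, Real.sq_sqrt hC]; exact h1
    have hy : y ≤ N' * √D := by
      apply le_of_sq_le_sq _ (by positivity)
      rw [mul_pow, Real.sq_sqrt hD]; exact h2
    calc ‖inner ℂ (∫ s in J, W s) (∫ s in I, V s)‖ ≤ y * x := norm_inner_le_norm _ _
      _ ≤ (N' * √D) * (N * √C) := by
        apply mul_le_mul hy hx (norm_nonneg _) (by positivity)
      _ = N * N' * (√C * √D) := by ring
      _ ≤ N * N' * ((C + D) / 2) := by
        gcongr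
        nlinarith [sq_nonneg (√C - √D), Real.sq_sqrt hC, Real.sq_sqrt hD]
      _ = _ := by ring
  · rw [← integral_inner hV.integrableOn]
    refine norm_integral_le_of_norm_le hΦi.integrableOn ?_
    rw [ae_restrict_iff' measurableSet_Ioc]
    filter_upwards [hκae] with s hs hsI
    rw [← inner_conj_symm, RCLike.norm_conj, ← integral_inner hW.integrableOn]
    have hs' : Integrable fun t => κ (s - t) * d t ^ 2 := by
      have := hs.comp_sub_left s
      simpa using this
    have hκs : Integrable fun t => κ (s - t) := hκ.comp_sub_left s
    have hdom : Integrable fun t => B / 2 * (c s ^ 2 * κ (s - t) + κ (s - t) * d t ^ 2) :=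
      ((hκs.const_mul _).add hs').const_mul _
    have hΦs : Φ s = ∫ t, B / 2 * (c s ^ 2 * κ (s - t) + κ (s - t) * d t ^ 2) := by
      rw [integral_const_mul, integral_add (hκs.const_mul _) hs', integral_const_mul,
        integral_sub_left_eq_self κ volume s]
      simp only [hΦ]
      rw [← integral_sub_left_eq_self (fun t => κ t * d (s - t) ^ 2) volume s]
      simp
    rw [hΦs, ← integral_indicator measurableSet_Ioc.compl]
    refine norm_integral_le_of_norm_le hdom (Filter.Eventually.of_forall fun t => ?_)
    have hnn : 0 ≤ B / 2 * (c s ^ 2 * κ (s - t) + κ (s - t) * d t ^ 2) := by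
      have := farKernel_nonneg σ T (s - t)
      rw [← hκdef] at this
      positivity
    by_cases ht : t ∈ Jᶜ
    · rw [Set.indicator_of_mem ht]
      have hfarst : T ≤ |s - t| := by
        rw [← hI, hI'] at hsI
        rw [Set.mem_compl_iff, hJ, Set.mem_Ioc, not_and_or, not_lt, not_le] at ht
        obtain ⟨h1, h2⟩ := hsI
        rcases ht with h | h
        · exact (by linarith : T ≤ s - t).trans (le_abs_self _)
        · rw [abs_sub_comm]; exact (by linarith : T ≤ t - s).trans (le_abs_self _)
      have hne : s ≠ t := by rintro rfl; simp at hfarst; linarith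
      have hκe : κ (s - t) = |s - t| ^ (-σ) := by
        rw [hκdef]; unfold farKernel; rw [Set.indicator_of_mem]; exact hfarst
      refine (hfar s t hne).trans ?_
      rw [hκe]
      have : 0 ≤ B * |s - t| ^ (-σ) := by positivity
      nlinarith [sq_nonneg (c s - d t)]
    · rw [Set.indicator_of_notMem ht, norm_zero]; exact hnn


/-- The estimate for a single spatial scale, with natural time scale `T`: at times closer than `T`
the trivial bound is used, at larger distances the dispersive decay. -/
lemma single_scale {σ T A : ℝ} (hσ : 1 < σ) (hT : 0 < T) (hA : 0 ≤ A)
    {V : ℝ → H} (hV : Integrable V) {c : ℝ → ℝ} (hc : Integrable c)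
    (hc2 : Integrable fun s => c s ^ 2)
    (hb : ∀ s, ‖V s‖ ≤ A * T ^ (-(1 / 2) : ℝ) * c s)
    (hfar : ∀ s t, s ≠ t →
      ‖inner ℂ (V s) (V t)‖ ≤ A ^ 2 * T ^ (σ - 1) * |s - t| ^ (-σ) * (c s * c t)) :
    ‖∫ s, V s‖ ^ 2 ≤ A ^ 2 * (6 + 2 / (σ - 1)) * ∫ s, c s ^ 2 := by
  have hTT : (T ^ (-(1 / 2) : ℝ)) ^ 2 * T = 1 := by
    rw [← Real.rpow_natCast, ← Real.rpow_mul hT.le]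
    norm_num
    rw [Real.rpow_neg_one, inv_mul_cancel₀ hT.ne']
  have hTs : T ^ (σ - 1) * T ^ (1 - σ) = 1 := by
    rw [← Real.rpow_add hT]; simp
  have h := near_far (N := A) (N' := 2 * A) hσ hT (by positivity : 0 ≤ A ^ 2 * T ^ (σ - 1)) hA
    (by positivity) hV hV hc2 hc2 ?_ ?_ hfar
  · rw [norm_inner_self_sq] at h
    refine h.trans (le_of_eq ?_)
    have hs : σ - 1 ≠ 0 := by linarith
    have : A ^ 2 * T ^ (σ - 1) * (T ^ (1 - σ) / (σ - 1)) = A ^ 2 * (1 / (σ - 1)) := by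
      rw [mul_assoc, ← mul_div_assoc, hTs]
    rw [this]
    field_simp
    ring
  · intro a
    refine (crude_window hc hc2 hb (by linarith : a < a + T)).trans (le_of_eq ?_)
    linear_combination (A ^ 2 * ∫ s in Set.Ioc a (a + T), c s ^ 2) * hTT
  · intro a
    refine (crude_window hc hc2 hb (by linarith : a - T < a + 2 * T)).trans ?_
    have h0 : 0 ≤ ∫ s in Set.Ioc (a - T) (a + 2 * T), c s ^ 2 :=
      integral_nonneg fun s => sq_nonneg _
    have : (A * T ^ (-(1 / 2) : ℝ)) ^ 2 * (a + 2 * T - (a - T)) = 3 * A ^ 2 := by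
      linear_combination (3 * A ^ 2) * hTT
    rw [this]
    gcongr
    nlinarith [sq_nonneg A]

/-- Interaction of two spatial scales with natural times `T₂ ≤ T₁`: the splitting time
`T₁^{3/4} T₂^{1/4}` lies strictly between the two, so that both the near and the far part gain a
power of `T₂ / T₁`. -/
lemma cross_scale {σ T₁ T₂ A : ℝ} (hσ : 1 < σ) (hT₂ : 0 < T₂) (hTT : T₂ ≤ T₁) (hA : 0 ≤ A)
    {V W : ℝ → H} (hV : Integrable V) (hW : Integrable W) {c d : ℝ → ℝ} (hc : Integrable c)
    (hc2 : Integrable fun s => c s ^ 2) (hd : Integrable d)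
    (hd2 : Integrable fun s => d s ^ 2)
    (hbV : ∀ s, ‖V s‖ ≤ A * T₁ ^ (-(1 / 2) : ℝ) * c s)
    (hbW : ∀ s, ‖W s‖ ≤ A * T₂ ^ (-(1 / 2) : ℝ) * d s)
    (hfarW : ∀ s t, s ≠ t →
      ‖inner ℂ (W s) (W t)‖ ≤ A ^ 2 * T₂ ^ (σ - 1) * |s - t| ^ (-σ) * (d s * d t))
    (hfar : ∀ s t, s ≠ t → ‖inner ℂ (V s) (W t)‖ ≤
      A ^ 2 * (T₁ * T₂) ^ ((σ - 1) / 2) * |s - t| ^ (-σ) * (c s * d t)) :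
    ‖inner ℂ (∫ s, V s) (∫ s, W s)‖ ≤
      A ^ 2 * (2 * (6 + 2 / (σ - 1))) * (T₂ / T₁) ^ min (1 / 8) ((σ - 1) / 4) *
        ((∫ s, c s ^ 2) + ∫ s, d s ^ 2) := by
  have hT₁ : 0 < T₁ := hT₂.trans_le hTT
  set K := 6 + 2 / (σ - 1) with hK
  have hσ' : 0 < σ - 1 := by linarith
  have hK1 : 1 ≤ K := by
    have : 0 < 2 / (σ - 1) := by positivity
    linarith
  set ρ := T₂ / T₁ with hρ
  have hρ0 : 0 < ρ := by positivity
  have hρ1 : ρ ≤ 1 := by rw [hρ, div_le_one hT₁]; exact hTT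
  have hT₂ρ : T₂ = T₁ * ρ := by rw [hρ]; field_simp
  -- The window length `T₁ρ^{1/4}` is short for `V`, which gains `ρ^{1/8}` from `crude_window`; for `W`
  -- it is long, and the bound over the whole line is used; the far part gains `ρ^{(σ-1)/4}`.
  set T := T₁ * ρ ^ (1 / 4 : ℝ) with hT
  have hTpos : 0 < T := by positivity
  have hN : (ρ ^ (1 / 8 : ℝ)) ^ 2 = ρ ^ (1 / 4 : ℝ) := by
    rw [← Real.rpow_natCast, ← Real.rpow_mul hρ0.le]; norm_num
  have h1 : (T₁ ^ (-(1 / 2) : ℝ)) ^ 2 * T₁ = 1 := by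
    rw [← Real.rpow_natCast, ← Real.rpow_mul hT₁.le]
    norm_num
    rw [Real.rpow_neg_one, inv_mul_cancel₀ hT₁.ne']
  have h := near_far (N := A * ρ ^ (1 / 8 : ℝ)) (N' := A * K) hσ hTpos
    (by positivity : 0 ≤ A ^ 2 * (T₁ * T₂) ^ ((σ - 1) / 2)) (by positivity)
    (by positivity) hV hW hc2 hd2 ?_ ?_ hfar
  · refine h.trans ?_
    have hC : 0 ≤ (∫ s, c s ^ 2) + ∫ s, d s ^ 2 :=
      add_nonneg (integral_nonneg fun s => sq_nonneg _) (integral_nonneg fun s => sq_nonneg _)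
    refine mul_le_mul_of_nonneg_right ?_ hC
    have hB : (T₁ * T₂) ^ ((σ - 1) / 2) * T ^ (1 - σ) = ρ ^ ((σ - 1) / 4) := by
      rw [hT₂ρ, hT, Real.mul_rpow hT₁.le (by positivity), Real.mul_rpow hT₁.le hρ0.le,
        Real.mul_rpow hT₁.le (by positivity), ← Real.rpow_mul hρ0.le]
      calc _ = (T₁ ^ ((σ - 1) / 2) * T₁ ^ ((σ - 1) / 2) * T₁ ^ (1 - σ)) *
            (ρ ^ ((σ - 1) / 2) * ρ ^ (1 / 4 * (1 - σ))) := by ring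
        _ = _ := by
          rw [← Real.rpow_add hT₁, ← Real.rpow_add hT₁, ← Real.rpow_add hρ0]
          rw [show (σ - 1) / 2 + (σ - 1) / 2 + (1 - σ) = 0 by ring, Real.rpow_zero, one_mul]
          congr 1; ring
    have e1 : ρ ^ (1 / 8 : ℝ) ≤ ρ ^ min (1 / 8) ((σ - 1) / 4) :=
      Real.rpow_le_rpow_of_exponent_ge hρ0 hρ1 (min_le_left _ _)
    have e2 : ρ ^ ((σ - 1) / 4) ≤ ρ ^ min (1 / 8) ((σ - 1) / 4) :=
      Real.rpow_le_rpow_of_exponent_ge hρ0 hρ1 (min_le_right _ _)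
    set P := ρ ^ min (1 / 8) ((σ - 1) / 4)
    have hK2 : 1 / (σ - 1) ≤ K / 2 := by
      rw [hK]; have : 2 / (σ - 1) = 2 * (1 / (σ - 1)) := by ring
      linarith
    calc 3 / 2 * (A * ρ ^ (1 / 8 : ℝ) * (A * K)) +
          A ^ 2 * (T₁ * T₂) ^ ((σ - 1) / 2) * (T ^ (1 - σ) / (σ - 1))
        = A ^ 2 * (3 / 2 * K * ρ ^ (1 / 8 : ℝ) + (1 / (σ - 1)) *
            ((T₁ * T₂) ^ ((σ - 1) / 2) * T ^ (1 - σ))) := by ring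
      _ ≤ A ^ 2 * (3 / 2 * K * P + (K / 2) * P) := by
          rw [hB]; gcongr
      _ = _ := by ring
  · intro a
    refine (crude_window hc hc2 hbV (by linarith : a < a + T)).trans (le_of_eq ?_)
    rw [mul_pow A (ρ ^ _), hN, add_sub_cancel_left, hT]
    linear_combination (A ^ 2 * ρ ^ (1 / 4 : ℝ) *
      ∫ s in Set.Ioc a (a + T₁ * ρ ^ (1 / 4 : ℝ)), c s ^ 2) * h1
  · intro a
    set J := Set.Ioc (a - T) (a + 2 * T) with hJ
    have hJm : MeasurableSet J := measurableSet_Ioc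
    have hsq : ∀ s, J.indicator d s ^ 2 = J.indicator (fun s => d s ^ 2) s := fun s => by
      by_cases hs : s ∈ J <;> simp [hs]
    have := single_scale (A := A) hσ hT₂ hA (hW.indicator hJm) (hd.indicator hJm)
      (by simp_rw [hsq]; exact hd2.indicator hJm) ?_ ?_
    · simp_rw [hsq] at this
      rw [integral_indicator hJm, integral_indicator hJm] at this
      refine this.trans ?_
      have h0 : 0 ≤ ∫ s in J, d s ^ 2 := integral_nonneg fun s => sq_nonneg _
      refine mul_le_mul_of_nonneg_right ?_ h0
      rw [mul_pow]
      have := sq_nonneg A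
      gcongr
      nlinarith
    · intro s
      by_cases hs : s ∈ J
      · simpa [hs] using hbW s
      · simp [hs]
    · intro s t hst
      by_cases hs : s ∈ J
      · by_cases ht : t ∈ J
        · simpa [hs, ht] using hfarW s t hst
        · simp [ht]
      · simp [hs]

/-- Abstract endpoint estimate of Keel–Tao type: a superposition of dyadic pieces `V k`, where
`V k` has natural time scale `lam ^ k`. The interaction of two scales decays geometrically in their
distance, hence the pieces are summable in `ℓ²`. -/
theorem keel_tao_abstract {σ lam : ℝ} (hσ : 1 < σ) (hlam : 1 < lam) :
    ∃ K : ℝ, 0 ≤ K ∧ ∀ (S : Finset ℤ) (A : ℝ) (V : ℤ → ℝ → H) (c : ℤ → ℝ → ℝ), 0 ≤ A →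
      (∀ k, Integrable (V k)) → (∀ k, Integrable (c k)) →
      (∀ k, Integrable fun s => c k s ^ 2) →
      (∀ k s, ‖V k s‖ ≤ A * (lam ^ k) ^ (-(1 / 2) : ℝ) * c k s) →
      (∀ k l s t, s ≠ t → ‖inner ℂ (V k s) (V l t)‖ ≤
        A ^ 2 * (lam ^ k * lam ^ l) ^ ((σ - 1) / 2) * |s - t| ^ (-σ) * (c k s * c l t)) →
      ‖∑ k ∈ S, ∫ s, V k s‖ ^ 2 ≤ K * A ^ 2 * ∑ k ∈ S, ∫ s, c k s ^ 2 := by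
  have hσ' : 0 < σ - 1 := by linarith
  have hlam0 : 0 < lam := by linarith
  set δ := min (1 / 8) ((σ - 1) / 4) with hδ
  have hδ0 : 0 < δ := by rw [hδ]; apply lt_min <;> positivity
  -- The interaction of the scales `k` and `l` decays like `η^{|k-l|}`.
  set η := lam ^ (-δ) with hη
  have hη0 : 0 < η := by positivity
  have hη1 : η < 1 := Real.rpow_lt_one_of_one_lt_of_neg hlam (by linarith)
  set K₁ := 2 * (6 + 2 / (σ - 1)) with hK₁
  have hK₁0 : 0 ≤ K₁ := by positivity
  have hsum : Summable fun m : ℤ => η ^ m.natAbs := by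
    apply Summable.of_nat_of_neg
    · simpa using summable_geometric_of_lt_one hη0.le hη1
    · simpa using summable_geometric_of_lt_one hη0.le hη1
  refine ⟨2 * K₁ * ∑' m : ℤ, η ^ m.natAbs, by positivity, ?_⟩
  intro S A V c hA hV hc hc2 hb hfar
  have hpow : ∀ k : ℤ, 0 < lam ^ k := fun k => zpow_pos hlam0 k
  set C : ℤ → ℝ := fun k => ∫ s, c k s ^ 2 with hC
  have hC0 : ∀ k, 0 ≤ C k := fun k => integral_nonneg fun s => sq_nonneg _
  have hord : ∀ k l, l ≤ k → ‖inner ℂ (∫ s, V k s) (∫ s, V l s)‖ ≤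
      A ^ 2 * K₁ * η ^ (k - l).natAbs * (C k + C l) := by
    intro k l hlk
    have := cross_scale hσ (hpow l) (zpow_le_zpow_right₀ hlam.le hlk) hA (hV k) (hV l) (hc k)
      (hc2 k) (hc l) (hc2 l) (hb k) (hb l) ?_ (hfar k l)
    · have e : (lam ^ l / lam ^ k) ^ δ = η ^ (k - l).natAbs := by
        rw [hη, ← zpow_sub₀ hlam0.ne', ← Real.rpow_intCast, ← Real.rpow_mul hlam0.le,
          ← Real.rpow_natCast, ← Real.rpow_mul hlam0.le]
        congr 1
        have : (((k - l).natAbs : ℕ) : ℝ) = (k : ℝ) - l := by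
          have h : (((k - l).natAbs : ℕ) : ℤ) = k - l := Int.natAbs_of_nonneg (by omega)
          rw [← Int.cast_natCast, h, Int.cast_sub]
        rw [this]; push_cast; ring
      rwa [e] at this
    · intro s t hst
      refine (hfar l l s t hst).trans (le_of_eq ?_)
      congr 3
      rw [← sq, ← Real.rpow_natCast, ← Real.rpow_mul (hpow l).le]
      congr 1
      push_cast; ring
  have hall : ∀ k l, ‖inner ℂ (∫ s, V k s) (∫ s, V l s)‖ ≤
      A ^ 2 * K₁ * η ^ (k - l).natAbs * (C k + C l) := by
    intro k l
    rcases le_total l k with h | h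
    · exact hord k l h
    · rw [← inner_conj_symm, RCLike.norm_conj, show (k - l).natAbs = (l - k).natAbs by omega,
        add_comm (C k)]
      exact hord l k h
  have hrow : ∀ k, ∑ l ∈ S, η ^ (k - l).natAbs ≤ ∑' m : ℤ, η ^ m.natAbs := by
    intro k
    rw [← (Equiv.subLeft k).tsum_eq (fun m : ℤ => η ^ m.natAbs)]
    exact ((Equiv.subLeft k).summable_iff.2 hsum).sum_le_tsum S (fun l _ => by positivity)
  calc ‖∑ k ∈ S, ∫ s, V k s‖ ^ 2
      = ‖inner ℂ (∑ k ∈ S, ∫ s, V k s) (∑ k ∈ S, ∫ s, V k s)‖ := (norm_inner_self_sq _).symm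
    _ ≤ ∑ k ∈ S, ∑ l ∈ S, ‖inner ℂ (∫ s, V k s) (∫ s, V l s)‖ := by
        rw [sum_inner]
        refine (norm_sum_le _ _).trans (Finset.sum_le_sum fun k _ => ?_)
        rw [inner_sum]
        exact norm_sum_le _ _
    _ ≤ ∑ k ∈ S, ∑ l ∈ S, A ^ 2 * K₁ * η ^ (k - l).natAbs * (C k + C l) :=
        Finset.sum_le_sum fun k _ => Finset.sum_le_sum fun l _ => hall k l
    _ = ∑ k ∈ S, ∑ l ∈ S, A ^ 2 * K₁ * η ^ (k - l).natAbs * C k +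
        ∑ k ∈ S, ∑ l ∈ S, A ^ 2 * K₁ * η ^ (k - l).natAbs * C l := by
        simp_rw [mul_add, Finset.sum_add_distrib]
    _ = 2 * ∑ k ∈ S, A ^ 2 * K₁ * C k * ∑ l ∈ S, η ^ (k - l).natAbs := by
        rw [two_mul]
        congr 1
        · refine Finset.sum_congr rfl fun k _ => ?_
          rw [Finset.mul_sum]
          exact Finset.sum_congr rfl fun l _ => by ring
        · rw [Finset.sum_comm]
          refine Finset.sum_congr rfl fun k _ => ?_
          rw [Finset.mul_sum]
          refine Finset.sum_congr rfl fun l _ => ?_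
          rw [show (l - k).natAbs = (k - l).natAbs by omega]; ring
    _ ≤ 2 * ∑ k ∈ S, A ^ 2 * K₁ * C k * ∑' m : ℤ, η ^ m.natAbs := by
        gcongr with k _
        exact hrow k
    _ = _ := by
        rw [← Finset.sum_mul, ← Finset.mul_sum]; ring

end AbstractKeelTao

/-! ### Gaussian kernels, the dispersive estimate and Plancherel -/

section FourierTools

open ComplexConjugate

variable {V : Type*} [NormedAddCommGroup V] [InnerProductSpace ℝ V] [MeasurableSpace V]
  [BorelSpace V] [FiniteDimensional ℝ V]

lemma norm_fourier_le (f : V → ℂ) (ξ : V) : ‖𝓕 f ξ‖ ≤ ∫ x, ‖f x‖ := by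
  rw [Real.fourier_eq]
  refine (norm_integral_le_integral_norm _).trans (le_of_eq ?_)
  simp_rw [Circle.norm_smul]

lemma norm_fourierInv_le (f : V → ℂ) (ξ : V) : ‖𝓕⁻ f ξ‖ ≤ ∫ x, ‖f x‖ := by
  rw [fourierInv_eq_fourier_neg]; exact norm_fourier_le f _

lemma continuous_fourier {f : V → ℂ} (hf : Integrable f) : Continuous (𝓕 f) :=
  VectorFourier.fourierIntegral_continuous Real.continuous_fourierChar
    (innerSL ℝ).continuous₂ hf

lemma continuous_fourierInv {f : V → ℂ} (hf : Integrable f) : Continuous (𝓕⁻ f) := by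
  have : 𝓕⁻ f = fun x => 𝓕 f (-x) := by ext x; exact fourierInv_eq_fourier_neg f x
  rw [this]; exact (continuous_fourier hf).comp continuous_neg

/-- The transform `𝓕⁻` is the adjoint of `𝓕`, tested on integrable functions. -/
lemma fourier_adj {a φ : V → ℂ} (ha : Integrable a) (hφ : Integrable φ) :
    ∫ ξ, 𝓕 a ξ * conj (φ ξ) = ∫ x, a x * conj (𝓕⁻ φ x) := by
  have h := VectorFourier.integral_fourierIntegral_smul_eq_flip (μ := (volume : Measure V))
    (ν := (volume : Measure V)) (L := innerₗ V)
    Real.continuous_fourierChar continuous_inner ha (g := fun ξ => conj (φ ξ))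
    ((Complex.conjCLE.toContinuousLinearMap.integrable_comp hφ))
  have h1 : ∀ x, VectorFourier.fourierIntegral 𝐞 volume (innerₗ V).flip (fun ξ => conj (φ ξ)) x
      = conj (𝓕⁻ φ x) := by
    intro x
    rw [Real.fourierInv_eq, ← integral_conj]
    simp only [VectorFourier.fourierIntegral]
    congr 1
    ext v
    simp only [Circle.smul_def, smul_eq_mul, map_mul, LinearMap.flip_apply, innerₗ_apply_apply]
    rw [← Circle.coe_inv_eq_conj, ← AddChar.map_neg_eq_inv, real_inner_comm]
  simp only [h1, smul_eq_mul] at h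
  exact h

lemma integrable_gauss {b : ℂ} (hb : 0 < b.re) :
    Integrable fun ξ : V => Complex.exp (-b * (‖ξ‖ : ℂ) ^ 2) := by
  simpa using GaussianFourier.integrable_cexp_neg_mul_sq_norm_add hb 0 (0 : V)

/-- The Fourier transform of the complex Gaussian `exp (-b |ξ|²)`, with the normalisation
`e^{-2πi⟨x, ξ⟩}` of the Fourier kernel. -/
noncomputable def gaussK (V : Type*) [NormedAddCommGroup V] [InnerProductSpace ℝ V]
    (b : ℂ) (z : V) : ℂ :=
  (π / b) ^ (Module.finrank ℝ V / 2 : ℂ) * Complex.exp (-π ^ 2 * (‖z‖ : ℂ) ^ 2 / b)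

lemma fourierInv_gauss {b : ℂ} (hb : 0 < b.re) (z : V) :
    𝓕⁻ (fun ξ : V => Complex.exp (-b * (‖ξ‖ : ℂ) ^ 2)) z = gaussK V b z := by
  rw [fourierInv_eq_fourier_neg, fourier_gaussian_innerProductSpace hb, gaussK, norm_neg]

lemma bounded_mul_integrable {w g : V → ℂ} (hw : Integrable w) (hg : Integrable g) :
    Integrable fun ξ => w ξ * 𝓕 g ξ :=
  hw.mul_bdd (c := ∫ x, ‖g x‖) (continuous_fourier hg).aestronglyMeasurable
    (Filter.Eventually.of_forall (norm_fourier_le g))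

/-- The sesquilinear form with Gaussian weight on the frequency side, as a double integral
against the Gaussian kernel on the physical side. -/
lemma gauss_form {b : ℂ} (hb : 0 < b.re) {f g : V → ℂ} (hf : Integrable f) (hg : Integrable g) :
    ∫ ξ, conj (𝓕 f ξ) * (Complex.exp (-b * (‖ξ‖ : ℂ) ^ 2) * 𝓕 g ξ)
      = ∫ y, g y * ∫ x, conj (f x) * gaussK V b (y - x) := by
  set w : V → ℂ := fun ξ => Complex.exp (-b * (‖ξ‖ : ℂ) ^ 2) with hw
  have hwi : Integrable w := integrable_gauss hb
  have hcw : Integrable fun ξ => conj (w ξ) :=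
    Complex.conjCLE.toContinuousLinearMap.integrable_comp hwi
  have h1 := fourier_adj hg (bounded_mul_integrable hcw hf)
  have h2 : ∫ ξ, conj (𝓕 f ξ) * (w ξ * 𝓕 g ξ) = ∫ ξ, 𝓕 g ξ * conj (conj (w ξ) * 𝓕 f ξ) := by
    congr 1; ext ξ; simp; ring
  rw [h2, h1]
  congr 1; ext y; congr 1
  have h3 : 𝓕⁻ (fun ξ => conj (w ξ) * 𝓕 f ξ) y
      = ∫ ξ, 𝓕 f ξ * conj ((𝐞 (-inner ℝ ξ y) : ℂ) * w ξ) := by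
    rw [Real.fourierInv_eq]
    congr 1; ext ξ
    simp only [Circle.smul_def, smul_eq_mul, map_mul]
    rw [← Circle.coe_inv_eq_conj, ← AddChar.map_neg_eq_inv, neg_neg]; ring
  have hint : Integrable fun ξ => (𝐞 (-inner ℝ ξ y) : ℂ) * w ξ := by
    have := (Real.fourierIntegral_convergent_iff (μ := volume) (f := w) y).2 hwi
    simpa [Circle.smul_def] using this
  have h4 : ∀ x, 𝓕⁻ (fun ξ => (𝐞 (-inner ℝ ξ y) : ℂ) * w ξ) x = gaussK V b (y - x) := by
    intro x
    rw [← neg_sub x y, gaussK, norm_neg, ← gaussK, ← fourierInv_gauss hb, Real.fourierInv_eq,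
      Real.fourierInv_eq]
    congr 1; ext ξ
    have h5 : inner ℝ ξ (x - y) = inner ℝ ξ x + -inner ℝ ξ y := by
      rw [inner_sub_right, sub_eq_add_neg]
    rw [h5, AddChar.map_add_eq_mul, Circle.smul_def, Circle.smul_def, Circle.coe_mul]
    simp only [smul_eq_mul, hw]
    ring
  rw [h3, fourier_adj hf hint, ← integral_conj]
  congr 1; ext x
  rw [h4]; simp

/-- The pointwise bound of the kernel behind the dispersive estimate; it does not depend on `ε`. -/
lemma norm_gaussK_le {ε t : ℝ} (hε : 0 < ε) (ht : t ≠ 0) (z : V) :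
    ‖gaussK V (ε + t * Complex.I) z‖ ≤ (π / |t|) ^ ((Module.finrank ℝ V : ℝ) / 2) := by
  set b : ℂ := ε + t * Complex.I with hb
  have hre : b.re = ε := by simp [hb]
  have him : b.im = t := by simp [hb]
  have hb0 : b ≠ 0 := by intro h; rw [h] at hre; simp at hre; linarith
  have htb : |t| ≤ ‖b‖ := him ▸ Complex.abs_im_le_norm b
  rw [gaussK, norm_mul]
  have h1 : ‖((π : ℂ) / b) ^ ((Module.finrank ℝ V : ℂ) / 2)‖ ≤
      (π / |t|) ^ ((Module.finrank ℝ V : ℝ) / 2) := by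
    have : ((Module.finrank ℝ V : ℂ) / 2) = (((Module.finrank ℝ V : ℝ) / 2 : ℝ) : ℂ) := by
      push_cast; ring
    rw [this, Complex.norm_cpow_of_ne_zero (div_ne_zero (by exact_mod_cast pi_ne_zero) hb0)]
    simp only [Complex.ofReal_re, Complex.ofReal_im, mul_zero, Real.exp_zero, div_one]
    refine Real.rpow_le_rpow (norm_nonneg _) ?_ (by positivity)
    rw [norm_div, Complex.norm_real, norm_of_nonneg pi_pos.le]
    have := abs_pos.2 ht
    gcongr
  have h2 : ‖Complex.exp (-π ^ 2 * (‖z‖ : ℂ) ^ 2 / b)‖ ≤ 1 := by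
    rw [Complex.norm_exp, ← Real.exp_zero]
    apply Real.exp_le_exp.2
    have h3 : (-(π:ℂ) ^ 2 * (‖z‖ : ℂ) ^ 2 / b) = ((-(π ^ 2 * ‖z‖ ^ 2) : ℝ) : ℂ) * b⁻¹ := by
      push_cast; rw [div_eq_mul_inv]; ring
    rw [h3, Complex.re_ofReal_mul, Complex.inv_re, hre]
    have : 0 < Complex.normSq b := Complex.normSq_pos.2 hb0
    have : 0 ≤ π ^ 2 * ‖z‖ ^ 2 * (ε / Complex.normSq b) := by positivity
    linarith
  calc _ ≤ (π / |t|) ^ ((Module.finrank ℝ V : ℝ) / 2) * 1 := by gcongr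
    _ = _ := mul_one _

/-- The dispersive estimate, in bilinear form and uniformly in the Gaussian regularisation. -/
lemma dispersive {ε t : ℝ} (hε : 0 < ε) (ht : t ≠ 0) {f g : V → ℂ} (hf : Integrable f)
    (hg : Integrable g) :
    ‖∫ ξ, conj (𝓕 f ξ) * (Complex.exp (-(ε + t * Complex.I) * (‖ξ‖ : ℂ) ^ 2) * 𝓕 g ξ)‖
      ≤ (π / |t|) ^ ((Module.finrank ℝ V : ℝ) / 2) * ((∫ x, ‖f x‖) * ∫ x, ‖g x‖) := by
  rw [gauss_form (by simpa using hε) hf hg]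
  set D := (π / |t|) ^ ((Module.finrank ℝ V : ℝ) / 2)
  have h1 : ∀ y, ‖∫ x, conj (f x) * gaussK V (ε + t * Complex.I) (y - x)‖ ≤ D * ∫ x, ‖f x‖ := by
    intro y
    rw [← integral_const_mul]
    refine norm_integral_le_of_norm_le (hf.norm.const_mul _) (Filter.Eventually.of_forall ?_)
    intro x
    rw [norm_mul, RCLike.norm_conj, mul_comm]
    gcongr
    exact norm_gaussK_le hε ht _
  calc _ ≤ ∫ y, ‖g y‖ * (D * ∫ x, ‖f x‖) := by
        refine norm_integral_le_of_norm_le (hg.norm.mul_const _) (Filter.Eventually.of_forall ?_)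
        intro y
        rw [norm_mul]
        gcongr
        exact h1 y
    _ = _ := by rw [integral_mul_const]; ring

lemma gaussK_real {ε : ℝ} (hε : 0 < ε) (z : V) :
    gaussK V (ε : ℂ) z =
      (((π / ε) ^ ((Module.finrank ℝ V : ℝ) / 2) * rexp (-(π ^ 2 / ε) * ‖z‖ ^ 2) : ℝ) : ℂ) := by
  rw [gaussK]
  push_cast
  rw [Complex.ofReal_cpow (by positivity)]
  push_cast
  congr 2
  ring

lemma integral_gaussK_real {ε : ℝ} (hε : 0 < ε) :
    ∫ z : V, (π / ε) ^ ((Module.finrank ℝ V : ℝ) / 2) * rexp (-(π ^ 2 / ε) * ‖z‖ ^ 2) = 1 := by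
  rw [integral_const_mul, GaussianFourier.integral_rexp_neg_mul_sq_norm (by positivity),
    ← Real.mul_rpow (by positivity) (by positivity)]
  have : π / ε * (π / (π ^ 2 / ε)) = 1 := by field_simp
  rw [this, Real.one_rpow]

/-- Plancherel's inequality with a Gaussian weight. By `gauss_form` the left-hand side is the
quadratic form of convolution with a positive kernel of integral `1`, to which Schur's test applies.
-/
lemma plancherel_gauss {ε : ℝ} (hε : 0 < ε) {f : V → ℂ} (hf : Integrable f) :
    ∫⁻ ξ, ENNReal.ofReal (rexp (-ε * ‖ξ‖ ^ 2)) * ‖𝓕 f ξ‖ₑ ^ 2 ≤ ∫⁻ x, ‖f x‖ₑ ^ 2 := by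
  have hk := gauss_form (b := (ε : ℂ)) (by simpa using hε) hf hf
  set k : V → ℝ := fun z =>
    (π / ε) ^ ((Module.finrank ℝ V : ℝ) / 2) * rexp (-(π ^ 2 / ε) * ‖z‖ ^ 2) with hkdef
  have hk0 : ∀ z, 0 ≤ k z := fun z => by positivity
  have hkc : Continuous k := by fun_prop
  have hki : Integrable k := by
    by_contra h
    have := integral_gaussK_real (V := V) hε
    rw [integral_undef h] at this
    norm_num at this
  have hkl : ∫⁻ z, ‖k z‖ₑ = 1 := by
    rw [← ofReal_integral_norm_eq_lintegral_enorm hki]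
    simp_rw [Real.norm_of_nonneg (hk0 _)]
    rw [integral_gaussK_real hε, ENNReal.ofReal_one]
  have hL : ∫ ξ, conj (𝓕 f ξ) * (Complex.exp (-(ε:ℂ) * (‖ξ‖ : ℂ) ^ 2) * 𝓕 f ξ)
      = ((∫ ξ, rexp (-ε * ‖ξ‖ ^ 2) * ‖𝓕 f ξ‖ ^ 2 : ℝ) : ℂ) := by
    rw [← integral_complex_ofReal]
    congr 1; ext ξ
    push_cast
    rw [← Complex.conj_mul']
    ring
  have hint : Integrable fun ξ => rexp (-ε * ‖ξ‖ ^ 2) * ‖𝓕 f ξ‖ ^ 2 := by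
    have h0 := (bounded_mul_integrable (integrable_gauss (b := (ε : ℂ)) (by simpa using hε)) hf)
    refine (h0.norm.mul_const (∫ x, ‖f x‖)).mono' ?_ (Filter.Eventually.of_forall ?_)
    · exact ((by fun_prop : Continuous fun ξ : V => rexp (-ε * ‖ξ‖ ^ 2)).mul
        ((continuous_fourier hf).norm.pow 2)).aestronglyMeasurable
    · intro ξ
      have : ‖Complex.exp (-(ε:ℂ) * (‖ξ‖ : ℂ) ^ 2)‖ = rexp (-ε * ‖ξ‖ ^ 2) := by
        rw [Complex.norm_exp]; congr 1; norm_cast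
      rw [Real.norm_of_nonneg (by positivity), norm_mul, this, pow_two ‖𝓕 f ξ‖, ← mul_assoc]
      gcongr
      exact norm_fourier_le f ξ
  have hle : ∫⁻ ξ, ENNReal.ofReal (rexp (-ε * ‖ξ‖ ^ 2)) * ‖𝓕 f ξ‖ₑ ^ 2
      = ‖∫ y, f y * ∫ x, conj (f x) * gaussK V ε (y - x)‖ₑ := by
    rw [← hk, hL, ← ofReal_norm, Complex.norm_real, norm_of_nonneg
      (integral_nonneg fun ξ => by positivity), ofReal_integral_eq_lintegral_ofReal hint
      (Filter.Eventually.of_forall fun ξ => by positivity)]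
    congr 1; ext ξ
    rw [ENNReal.ofReal_mul (by positivity), ← ofReal_norm,
      ENNReal.ofReal_pow (norm_nonneg _)]
  rw [hle]
  have hfm := hf.aestronglyMeasurable.enorm
  have amgm : ∀ a b : ℝ≥0∞, a * b ≤ (a ^ 2 + b ^ 2) / 2 := by
    intro a b
    rw [ENNReal.le_div_iff_mul_le (by simp) (by simp)]
    rcases eq_or_ne a ∞ with rfl | ha
    · simp
    rcases eq_or_ne b ∞ with rfl | hb
    · simp
    lift a to NNReal using ha
    lift b to NNReal using hb
    have := two_mul_le_add_sq a b
    rw [mul_comm, ← mul_assoc]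
    exact_mod_cast this
  have hkm : Measurable fun z => ‖k z‖ₑ := hkc.measurable.enorm
  have hKn : ∀ z, ‖gaussK V (ε : ℂ) z‖ₑ = ‖k z‖ₑ := by
    intro z; rw [gaussK_real hε, ← ofReal_norm, Complex.norm_real, ofReal_norm]
  have hfst : AEMeasurable (fun p : V × V => ‖f p.1‖ₑ) (volume.prod volume) :=
    hfm.comp_quasiMeasurePreserving Measure.quasiMeasurePreserving_fst
  have hsnd : AEMeasurable (fun p : V × V => ‖f p.2‖ₑ) (volume.prod volume) :=
    hfm.comp_quasiMeasurePreserving Measure.quasiMeasurePreserving_snd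
  have hkp : AEMeasurable (fun p : V × V => ‖k (p.1 - p.2)‖ₑ) (volume.prod volume) :=
    (hkm.comp (measurable_fst.sub measurable_snd)).aemeasurable
  calc ‖∫ y, f y * ∫ x, conj (f x) * gaussK V ε (y - x)‖ₑ
      ≤ ∫⁻ y, ‖f y * ∫ x, conj (f x) * gaussK V ε (y - x)‖ₑ := enorm_integral_le_lintegral_enorm _
    _ ≤ ∫⁻ y, ∫⁻ x, (‖f y‖ₑ ^ 2 / 2 * ‖k (y - x)‖ₑ + ‖f x‖ₑ ^ 2 / 2 * ‖k (y - x)‖ₑ) := by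
        refine lintegral_mono fun y => ?_
        rw [enorm_mul]
        calc ‖f y‖ₑ * ‖∫ x, conj (f x) * gaussK V ε (y - x)‖ₑ
            ≤ ‖f y‖ₑ * ∫⁻ x, ‖f x‖ₑ * ‖k (y - x)‖ₑ := by
              gcongr
              refine (enorm_integral_le_lintegral_enorm _).trans (le_of_eq ?_)
              congr 1; ext x
              rw [enorm_mul, hKn, RCLike.enorm_conj]
          _ ≤ ∫⁻ x, ‖f y‖ₑ * (‖f x‖ₑ * ‖k (y - x)‖ₑ) := lintegral_const_mul_le _ _
          _ ≤ _ := by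
              refine lintegral_mono fun x => ?_
              dsimp only
              rw [← mul_assoc, ← add_mul, ← ENNReal.add_div]
              gcongr
              exact amgm _ _
    _ = (∫⁻ y, ∫⁻ x, ‖f y‖ₑ ^ 2 / 2 * ‖k (y - x)‖ₑ) +
          ∫⁻ y, ∫⁻ x, ‖f x‖ₑ ^ 2 / 2 * ‖k (y - x)‖ₑ := by
        have e1 : AEMeasurable (Function.uncurry fun y x => ‖f y‖ₑ ^ 2 / 2 * ‖k (y - x)‖ₑ)
            (volume.prod volume) := (hfst.pow_const 2).div_const 2 |>.mul hkp
        have e2 : AEMeasurable (Function.uncurry fun y x => ‖f x‖ₑ ^ 2 / 2 * ‖k (y - x)‖ₑ)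
            (volume.prod volume) := (hsnd.pow_const 2).div_const 2 |>.mul hkp
        have e3 := lintegral_lintegral e1
        have e4 := lintegral_lintegral e2
        have e12 : AEMeasurable (Function.uncurry fun y x => ‖f y‖ₑ ^ 2 / 2 * ‖k (y - x)‖ₑ
          + ‖f x‖ₑ ^ 2 / 2 * ‖k (y - x)‖ₑ) (volume.prod volume) := e1.add e2
        have e5 := lintegral_lintegral e12
        rw [e3, e4, e5]
        exact lintegral_add_left' e1 _
    _ = (∫⁻ y, ‖f y‖ₑ ^ 2 / 2) + ∫⁻ x, ‖f x‖ₑ ^ 2 / 2 := by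
        congr 1
        · refine lintegral_congr fun y => ?_
          rw [lintegral_const_mul _ (by fun_prop),
            lintegral_sub_left_eq_self (fun z => ‖k z‖ₑ) y, hkl, mul_one]
        · rw [lintegral_lintegral_swap ((hsnd.pow_const 2).div_const 2 |>.mul hkp)]
          refine lintegral_congr fun x => ?_
          rw [lintegral_const_mul _ (by fun_prop),
            lintegral_sub_right_eq_self (fun z => ‖k z‖ₑ) x, hkl, mul_one]
    _ = ∫⁻ x, ‖f x‖ₑ ^ 2 := by
        rw [← lintegral_add_left' ((hfm.pow_const 2).div_const 2)]
        refine lintegral_congr fun x => ?_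
        rw [ENNReal.add_halves]

/-- Plancherel's inequality `‖𝓕 f‖₂ ≤ ‖f‖₂` for integrable `f`. -/
lemma plancherel_le {f : V → ℂ} (hf : Integrable f) :
    ∫⁻ ξ, ‖𝓕 f ξ‖ₑ ^ 2 ≤ ∫⁻ x, ‖f x‖ₑ ^ 2 := by
  have hlim : ∀ ξ : V, Filter.Tendsto
      (fun k : ℕ => ENNReal.ofReal (rexp (-(1 / ((k : ℝ) + 1)) * ‖ξ‖ ^ 2)) * ‖𝓕 f ξ‖ₑ ^ 2)
      Filter.atTop (nhds (‖𝓕 f ξ‖ₑ ^ 2)) := by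
    intro ξ
    have h1 : Filter.Tendsto (fun k : ℕ => rexp (-(1 / ((k : ℝ) + 1)) * ‖ξ‖ ^ 2))
        Filter.atTop (nhds (rexp (-0 * ‖ξ‖ ^ 2))) :=
      (Real.continuous_exp.tendsto _).comp
        ((tendsto_one_div_add_atTop_nhds_zero_nat.neg).mul_const _)
    simp only [neg_zero, zero_mul, Real.exp_zero] at h1
    have h2 := ENNReal.Tendsto.mul_const (b := ‖𝓕 f ξ‖ₑ ^ 2) (ENNReal.tendsto_ofReal h1)
      (Or.inl (by simp))
    simpa using h2
  calc ∫⁻ ξ, ‖𝓕 f ξ‖ₑ ^ 2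
      = ∫⁻ ξ, Filter.liminf (fun k : ℕ =>
          ENNReal.ofReal (rexp (-(1 / ((k : ℝ) + 1)) * ‖ξ‖ ^ 2)) * ‖𝓕 f ξ‖ₑ ^ 2)
          Filter.atTop := lintegral_congr fun ξ => (hlim ξ).liminf_eq.symm
    _ ≤ Filter.liminf (fun k : ℕ => ∫⁻ ξ,
          ENNReal.ofReal (rexp (-(1 / ((k : ℝ) + 1)) * ‖ξ‖ ^ 2)) * ‖𝓕 f ξ‖ₑ ^ 2)
          Filter.atTop := by
        refine lintegral_liminf_le fun k => ?_
        have : Continuous fun ξ : V => rexp (-(1 / ((k : ℝ) + 1)) * ‖ξ‖ ^ 2) := by fun_prop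
        exact this.measurable.ennreal_ofReal.mul
          ((continuous_fourier hf).measurable.enorm.pow_const 2)
    _ ≤ _ := Filter.liminf_le_of_le (by isBoundedDefault) fun b hb => by
        obtain ⟨k, hk⟩ := hb.exists
        exact hk.trans (plancherel_gauss (by positivity) hf)

lemma plancherel_inv_le {f : V → ℂ} (hf : Integrable f) :
    ∫⁻ ξ, ‖𝓕⁻ f ξ‖ₑ ^ 2 ≤ ∫⁻ x, ‖f x‖ₑ ^ 2 := by
  have h1 : ∫⁻ ξ, ‖𝓕⁻ f ξ‖ₑ ^ 2 = ∫⁻ ξ, ‖𝓕 f (-ξ)‖ₑ ^ 2 := by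
    simp_rw [fourierInv_eq_fourier_neg]
  rw [h1, lintegral_neg_eq_self (fun ξ => ‖𝓕 f ξ‖ₑ ^ 2)]
  exact plancherel_le hf

/-- A family of `L²` classes with jointly measurable representatives is strongly measurable. -/
lemma measurable_toLp {g : ℝ → V → ℂ} (hg : Measurable (Function.uncurry g))
    (hL : ∀ s, MemLp (g s) 2 (volume : Measure V)) : StronglyMeasurable fun s => (hL s).toLp (g s) := by
  have : Fact ((2:ℝ≥0∞) ≠ ∞) := ⟨by simp⟩
  have : SecondCountableTopology (Lp ℂ 2 (volume : Measure V)) := inferInstance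
  let _ : MeasurableSpace (Lp ℂ 2 (volume : Measure V)) := borel _
  have : BorelSpace (Lp ℂ 2 (volume : Measure V)) := ⟨rfl⟩
  refine Measurable.stronglyMeasurable ?_
  have hball : ∀ (a : Lp ℂ 2 (volume : Measure V)) (r : ℝ≥0∞),
      MeasurableSet ((fun s => (hL s).toLp (g s)) ⁻¹' Metric.eball a r) := by
    intro a r
    have hm : Measurable fun s => ∫⁻ x, ‖g s x - a x‖ₑ ^ (2:ℝ)  := by
      have ha : Measurable fun p : ℝ × V => a p.2 :=
        (Lp.stronglyMeasurable a).measurable.comp measurable_snd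
      exact Measurable.lintegral_prod_right' (f := fun p : ℝ × V => ‖g p.1 p.2 - a p.2‖ₑ ^ (2:ℝ))
        ((hg.sub ha).enorm.pow_const 2)
    have : ((fun s => (hL s).toLp (g s)) ⁻¹' Metric.eball a r)
        = {s | (∫⁻ x, ‖g s x - a x‖ₑ ^ (2:ℝ) ) ^ (1 / (2:ℝ)) < r} := by
      ext s
      simp only [Set.mem_preimage, Metric.mem_eball, Set.mem_ofPred_eq]
      rw [Lp.edist_def, eLpNorm_eq_lintegral_rpow_enorm_toReal (by simp) (by simp)]
      simp only [ENNReal.toReal_ofNat]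
      have : ∫⁻ x, ‖(((hL s).toLp (g s) : Lp ℂ 2 (volume : Measure V)) - a : V → ℂ) x‖ₑ ^ (2:ℝ) 
          = ∫⁻ x, ‖g s x - a x‖ₑ ^ (2:ℝ)  := by
        refine lintegral_congr_ae ?_
        filter_upwards [(hL s).coeFn_toLp] with x hx
        simp [hx]
      rw [this]
    rw [this]
    exact measurableSet_lt (hm.pow_const _) measurable_const
  refine measurable_of_isOpen fun U hU => ?_
  obtain ⟨T, hT, hTU⟩ : ∃ T : Set (Set (Lp ℂ 2 (volume : Measure V))), T.Countable ∧
      (∀ t ∈ T, ∃ a r, t = Metric.eball a r) ∧ U = ⋃₀ T := by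
    obtain ⟨T, hT, hTS, hTU⟩ := TopologicalSpace.isOpen_sUnion_countable
      {t : Set (Lp ℂ 2 (volume : Measure V)) | (∃ a r, t = Metric.eball a r) ∧ t ⊆ U}
      (by rintro t ⟨⟨a, r, rfl⟩, -⟩; exact Metric.isOpen_eball)
    refine ⟨T, hT, fun t ht => (hTS ht).1, ?_⟩
    rw [hTU]
    refine Set.Subset.antisymm (fun a ha => ?_) (Set.sUnion_subset fun t ht => ht.2)
    obtain ⟨r, hr, h⟩ := EMetric.isOpen_iff.1 hU a ha
    exact ⟨_, ⟨⟨a, r, rfl⟩, h⟩, Metric.mem_eball_self hr⟩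
  rw [hTU.2, Set.sUnion_eq_biUnion, Set.preimage_iUnion₂]
  refine MeasurableSet.biUnion hT fun t ht => ?_
  obtain ⟨a, r, rfl⟩ := hTU.1 t ht
  exact hball a r

end FourierTools

/-! ### The endpoint estimate for superpositions of atoms -/

section Atoms

open ComplexConjugate

variable {V : Type*} [NormedAddCommGroup V] [InnerProductSpace ℝ V] [MeasurableSpace V]
  [BorelSpace V] [FiniteDimensional ℝ V]

lemma measurable_fourierInv_param {f : ℝ → V → ℂ} (hf : Measurable (Function.uncurry f)) :
    Measurable (Function.uncurry fun τ => 𝓕⁻ (f τ)) := by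
  have h : StronglyMeasurable (Function.uncurry fun (p : ℝ × V) (v : V) =>
      (𝐞 (inner ℝ v p.2) : ℂ) * f p.1 v) := by
    refine Measurable.stronglyMeasurable ?_
    refine Measurable.mul ?_ (hf.comp (measurable_fst.fst.prodMk measurable_snd))
    have : Continuous fun p : (ℝ × V) × V => (𝐞 (inner ℝ p.2 p.1.2) : ℂ) := by
      have := Real.continuous_fourierChar
      fun_prop
    exact this.measurable
  have h2 := h.integral_prod_right (ν := (volume : Measure V))
  convert h2.measurable using 1
  ext p
  simp only [Function.uncurry]
  rw [Real.fourierInv_eq]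
  rfl

lemma measurable_fourier_param {f : ℝ → V → ℂ} (hf : Measurable (Function.uncurry f)) :
    Measurable (Function.uncurry fun τ => 𝓕 (f τ)) := by
  have h := (measurable_fourierInv_param hf).comp
    (measurable_fst.prodMk measurable_snd.neg : Measurable fun p : ℝ × V => (p.1, -p.2))
  convert h using 1
  ext p
  simp only [Function.uncurry, Function.comp]
  rw [fourierInv_eq_fourier_neg, neg_neg]

/-- The Gaussian multiplier `exp (-(ε + i τ) |ξ|²)`. -/
noncomputable def gmul (ε τ : ℝ) (ξ : V) : ℂ :=
  Complex.exp (-(ε + τ * Complex.I) * (‖ξ‖ : ℂ) ^ 2)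

lemma norm_gmul (ε τ : ℝ) (ξ : V) : ‖gmul ε τ ξ‖ = rexp (-ε * ‖ξ‖ ^ 2) := by
  rw [gmul, Complex.norm_exp]
  congr 1
  have : (-((ε:ℂ) + τ * Complex.I) * (‖ξ‖ : ℂ) ^ 2) =
      ((‖ξ‖ ^ 2 : ℝ) : ℂ) * (-((ε:ℂ) + τ * Complex.I)) := by push_cast; ring
  rw [this, Complex.re_ofReal_mul]
  simp; ring

lemma norm_gmul_le_one {ε : ℝ} (hε : 0 ≤ ε) (τ : ℝ) (ξ : V) : ‖gmul ε τ ξ‖ ≤ 1 := by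
  rw [norm_gmul, ← Real.exp_zero]
  apply Real.exp_le_exp.2
  have : 0 ≤ ε * ‖ξ‖ ^ 2 := by positivity
  linarith

lemma measurable_gmul (ε : ℝ) : Measurable (Function.uncurry (gmul (V := V) ε)) := by
  have : Continuous (Function.uncurry (gmul (V := V) ε)) := by
    unfold gmul Function.uncurry; fun_prop
  exact this.measurable

lemma measurable_gmul_neg (ε : ℝ) : Measurable fun p : ℝ × V => gmul ε (-p.1) p.2 := by
  have : Continuous fun p : ℝ × V => gmul ε (-p.1) p.2 := by
    unfold gmul; fun_prop
  exact this.measurable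

/-- Group law: the interaction of the times `s` and `t` is governed by the multiplier at `s - t`. -/
lemma conj_gmul_mul (ε s t : ℝ) (ξ : V) :
    conj (gmul ε (-s) ξ) * gmul ε (-t) ξ = gmul (2 * ε) (s - t) ξ := by
  unfold gmul
  rw [← Complex.exp_conj, ← Complex.exp_add]
  congr 1
  simp
  ring

lemma conj_gmul (ε s : ℝ) (ξ : V) : conj (gmul ε s ξ) = gmul ε (-s) ξ := by
  unfold gmul
  rw [← Complex.exp_conj]
  congr 1
  simp

lemma integrable_gmul {ε : ℝ} (hε : 0 < ε) (τ : ℝ) : Integrable (gmul (V := V) ε τ) :=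
  integrable_gauss (by simpa using hε)

lemma memLp_gmul {ε : ℝ} (hε : 0 < ε) (τ : ℝ) : MemLp (gmul (V := V) ε τ) 2 := by
  have hm : AEStronglyMeasurable (gmul (V := V) ε τ) := (integrable_gmul hε τ).aestronglyMeasurable
  rw [memLp_two_iff_integrable_sq_norm hm]
  refine (integrable_gmul hε τ).norm.mono (hm.norm.pow 2) (Filter.Eventually.of_forall fun ξ => ?_)
  rw [norm_pow, norm_norm, sq]
  exact mul_le_of_le_one_left (norm_nonneg _) (norm_gmul_le_one hε.le τ ξ)

lemma integrable_gmul_mul {ε : ℝ} (hε : 0 < ε) (τ : ℝ) {φ : V → ℂ} (hφ : MemLp φ 2) :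
    Integrable fun ξ => gmul ε τ ξ * φ ξ :=
  (memLp_gmul hε τ).integrable_mul hφ

/-- The regularised free evolution of the frequency profile `φ`. -/
noncomputable def hEvol (ε : ℝ) (φ : V → ℂ) (τ : ℝ) : V → ℂ :=
  𝓕⁻ fun ξ => gmul ε τ ξ * φ ξ

lemma measurable_hEvol (ε : ℝ) {φ : V → ℂ} (hφ : Measurable φ) :
    Measurable (Function.uncurry (hEvol ε φ)) :=
  measurable_fourierInv_param ((measurable_gmul ε).mul (hφ.comp measurable_snd))

lemma hEvol_bdd {ε : ℝ} (φ : V → ℂ) (τ : ℝ) (x : V) :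
    ‖hEvol ε φ τ x‖ ≤ ∫ ξ, ‖gmul ε 0 ξ * φ ξ‖ := by
  refine (norm_fourierInv_le _ _).trans (le_of_eq ?_)
  simp_rw [norm_mul, norm_gmul]

/-- The regularised evolution is an `L²` contraction at each time. -/
lemma hEvol_l2 {ε : ℝ} (hε : 0 < ε) (τ : ℝ) {φ : V → ℂ} (hφ : MemLp φ 2) :
    ∫⁻ x, ‖hEvol ε φ τ x‖ₑ ^ 2 ≤ ∫⁻ ξ, ‖φ ξ‖ₑ ^ 2 := by
  refine (plancherel_inv_le (integrable_gmul_mul hε τ hφ)).trans (lintegral_mono fun ξ => ?_)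
  dsimp only
  rw [enorm_mul]
  gcongr
  calc ‖gmul ε τ ξ‖ₑ * ‖φ ξ‖ₑ ≤ 1 * ‖φ ξ‖ₑ := by
        gcongr
        rw [← ofReal_norm]
        exact ENNReal.ofReal_le_one.2 (norm_gmul_le_one hε.le τ ξ)
    _ = _ := one_mul _

lemma norm_toLp_sq {f : V → ℂ} (hf : MemLp f 2) :
    ‖hf.toLp f‖ ^ 2 = (∫⁻ x, ‖f x‖ₑ ^ 2).toReal := by
  rw [Lp.norm_toLp, eLpNorm_eq_lintegral_rpow_enorm_toReal (by simp) (by simp),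
    ← ENNReal.toReal_pow, ENNReal.toReal_ofNat, ← ENNReal.rpow_natCast, ← ENNReal.rpow_mul]
  norm_num

set_option maxHeartbeats 400000 in
/-- The endpoint estimate for superpositions of evolved atoms `G k s`, supported on sets of measure
at most `2^{k+1}`, in the form dual to the free evolution of `φ`. -/
theorem atomic_strichartz (hd : 3 ≤ Module.finrank ℝ V) :
    ∃ K : ℝ, 0 ≤ K ∧ ∀ (ε : ℝ) (S : Finset ℤ) (G : ℤ → ℝ → V → ℂ) (c : ℤ → ℝ → ℝ) (φ : V → ℂ),
      0 < ε → MemLp φ 2 →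
      (∀ k, Measurable (Function.uncurry (G k))) →
      (∀ k, Integrable (c k)) → (∀ k, Integrable fun s => c k s ^ 2) → (∀ k s, 0 ≤ c k s) →
      (∀ k s x, ‖G k s x‖ ≤
        (2:ℝ) ^ (-(k:ℝ) * (1 / 2 + 1 / (Module.finrank ℝ V : ℝ))) * c k s) →
      (∀ k s, volume (Function.support (G k s)) ≤ ENNReal.ofReal ((2:ℝ) ^ ((k:ℝ) + 1))) →
      ‖∑ k ∈ S, ∫ s, ∫ x, G k s x * conj (hEvol ε φ s x)‖ ^ 2
        ≤ K * (∫⁻ ξ, ‖φ ξ‖ₑ ^ 2).toReal * ∑ k ∈ S, ∫ s, c k s ^ 2 := by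
  set d : ℝ := (Module.finrank ℝ V : ℝ) with hdd
  have hd3 : (3:ℝ) ≤ d := by rw [hdd]; exact_mod_cast hd
  -- The dispersive decay has order `σ = d/2`, and parabolic scaling assigns the time scale `2^{2k/d}`
  -- to sets of measure `2^k`.
  obtain ⟨K, hK, hmain⟩ := keel_tao_abstract (H := Lp ℂ 2 (volume : Measure V))
    (σ := d / 2) (lam := (2:ℝ) ^ (2 / d)) (by linarith)
    (Real.one_lt_rpow (by norm_num) (by positivity))
  have hpi : (1:ℝ) ≤ π ^ (d / 4) := Real.one_le_rpow (by linarith [Real.pi_gt_three]) (by positivity)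
  set A : ℝ := 2 * π ^ (d / 4) with hA
  have hA2 : A ^ 2 = 4 * π ^ (d / 2) := by
    rw [hA, mul_pow, ← Real.rpow_natCast (π ^ (d / 4)), ← Real.rpow_mul pi_pos.le]
    norm_num; congr 1; ring
  refine ⟨K * A ^ 2, by positivity, ?_⟩
  intro ε S G c φ hε hφ hGm hci hci2 hc0 hGb hGs
  have hlam : ∀ k : ℤ, ((2:ℝ) ^ (2 / d)) ^ k = (2:ℝ) ^ (2 / d * k) := by
    intro k
    rw [← Real.rpow_intCast, ← Real.rpow_mul (by norm_num)]
  have hGms : ∀ k s, Measurable (G k s) := fun k s => (hGm k).comp measurable_prodMk_left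
  -- `G k s` has height about `2^{-k(1/2+1/d)} c k s` and support of measure about `2^k`, which
  -- bounds all of its moments.
  have hpow : ∀ (k : ℤ) s (r : ℝ), 1 ≤ r → ∫⁻ x, ‖G k s x‖ₑ ^ r ≤
      ENNReal.ofReal (((2:ℝ) ^ (-(k:ℝ) * (1 / 2 + 1 / d)) * c k s) ^ r * (2:ℝ) ^ ((k:ℝ) + 1)) := by
    intro k s r hr
    have hsup : ∫⁻ x, ‖G k s x‖ₑ ^ r = ∫⁻ x in Function.support (G k s), ‖G k s x‖ₑ ^ r := by
      rw [setLIntegral_eq_of_support_subset]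
      intro x hx
      simp only [Function.mem_support] at hx ⊢
      intro h
      apply hx
      rw [h]; simp; linarith
    rw [hsup]
    calc _ ≤ ∫⁻ x in Function.support (G k s),
          ENNReal.ofReal (((2:ℝ) ^ (-(k:ℝ) * (1 / 2 + 1 / d)) * c k s) ^ r) := by
          refine lintegral_mono fun x => ?_
          rw [← ofReal_norm, ENNReal.ofReal_rpow_of_nonneg (norm_nonneg _) (by linarith)]
          exact ENNReal.ofReal_le_ofReal (Real.rpow_le_rpow (norm_nonneg _) (hGb k s x) (by linarith))
      _ ≤ _ := by
          rw [setLIntegral_const, ENNReal.ofReal_mul (by have := hc0 k s; positivity)]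
          gcongr
          exact hGs k s
  have hGi : ∀ k s, Integrable (G k s) := by
    intro k s
    refine ⟨(hGms k s).aestronglyMeasurable, ?_⟩
    have := hpow k s 1 le_rfl
    simp only [ENNReal.rpow_one] at this
    exact this.trans_lt ENNReal.ofReal_lt_top
  have hG1 : ∀ k s, ∫ x, ‖G k s x‖ ≤ 2 * (2:ℝ) ^ ((k:ℝ) * (1 / 2 - 1 / d)) * c k s := by
    intro k s
    have h1 := hpow k s 1 le_rfl
    simp only [ENNReal.rpow_one, Real.rpow_one] at h1
    have hc := hc0 k s
    rw [integral_norm_eq_lintegral_enorm (hGms k s).aestronglyMeasurable]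
    refine (ENNReal.toReal_le_of_le_ofReal (by positivity) h1).trans (le_of_eq ?_)
    have : (2:ℝ) ^ (-(k:ℝ) * (1 / 2 + 1 / d)) * (2:ℝ) ^ ((k:ℝ) + 1)
        = 2 * (2:ℝ) ^ ((k:ℝ) * (1 / 2 - 1 / d)) := by
      rw [← Real.rpow_add (by norm_num),
        show -(k:ℝ) * (1 / 2 + 1 / d) + ((k:ℝ) + 1) = 1 + (k:ℝ) * (1 / 2 - 1 / d) by ring,
        Real.rpow_add (by norm_num), Real.rpow_one]
    rw [← this]; ring
  have hG2 : ∀ k s, ∫⁻ x, ‖G k s x‖ₑ ^ (2:ℕ) ≤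
      ENNReal.ofReal (2 * (2:ℝ) ^ ((k:ℝ) * (- 2 / d)) * c k s ^ 2) := by
    intro k s
    have h1 := hpow k s 2 (by norm_num)
    simp only [ENNReal.rpow_ofNat, Real.rpow_ofNat] at h1
    refine h1.trans (le_of_eq ?_)
    congr 1
    have : ((2:ℝ) ^ (-(k:ℝ) * (1 / 2 + 1 / d))) ^ 2 * (2:ℝ) ^ ((k:ℝ) + 1)
        = 2 * (2:ℝ) ^ ((k:ℝ) * (-2 / d)) := by
      rw [← Real.rpow_natCast, ← Real.rpow_mul (by norm_num), ← Real.rpow_add (by norm_num),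
        show (-(k:ℝ) * (1 / 2 + 1 / d)) * ((2:ℕ):ℝ) + ((k:ℝ) + 1) = 1 + (k:ℝ) * (-2 / d) by
          push_cast; ring, Real.rpow_add (by norm_num), Real.rpow_one]
    rw [← this]; ring
  -- The evolution back to time zero, on the frequency side, where it is a vector of `L²`.
  obtain ⟨W, hW⟩ : ∃ W : ℤ → ℝ → V → ℂ, ∀ k s ξ, W k s ξ = gmul ε (-s) ξ * 𝓕 (G k s) ξ :=
    ⟨_, fun _ _ _ => rfl⟩
  have hWm : ∀ k, Measurable (Function.uncurry (W k)) := by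
    intro k
    have h2 : Measurable fun p : ℝ × V => 𝓕 (G k p.1) p.2 := measurable_fourier_param (hGm k)
    have h3 := (measurable_gmul_neg ε).mul h2
    convert h3 using 1
    ext p
    exact hW k p.1 p.2
  have hWms : ∀ k s, Measurable (W k s) := fun k s => (hWm k).comp measurable_prodMk_left
  have hW2 : ∀ k s, ∫⁻ ξ, ‖W k s ξ‖ₑ ^ 2 ≤
      ENNReal.ofReal (2 * (2:ℝ) ^ ((k:ℝ) * (- 2 / d)) * c k s ^ 2) := by
    intro k s
    refine le_trans (lintegral_mono fun ξ => ?_) ((plancherel_le (hGi k s)).trans (hG2 k s))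
    simp only [hW, enorm_mul]
    gcongr
    calc ‖gmul ε (-s) ξ‖ₑ * ‖𝓕 (G k s) ξ‖ₑ ≤ 1 * ‖𝓕 (G k s) ξ‖ₑ := by
          gcongr
          rw [← ofReal_norm]
          exact ENNReal.ofReal_le_one.2 (norm_gmul_le_one hε.le _ ξ)
      _ = _ := one_mul _
  have hWL : ∀ k s, MemLp (W k s) 2 := by
    intro k s
    rw [memLp_two_iff_integrable_sq_norm (hWms k s).aestronglyMeasurable]
    refine ⟨((hWms k s).norm.pow_const 2).aestronglyMeasurable, ?_⟩
    refine lt_of_le_of_lt (le_of_eq ?_) ((hW2 k s).trans_lt ENNReal.ofReal_lt_top)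
    refine lintegral_congr fun ξ => ?_
    rw [enorm_pow, enorm_norm]
  set U : ℤ → ℝ → Lp ℂ 2 (volume : Measure V) := fun k s => (hWL k s).toLp (W k s) with hU
  have hUm : ∀ k, StronglyMeasurable (U k) := fun k => measurable_toLp (hWm k) (hWL k)
  have hnlam : ∀ k : ℤ, (((2:ℝ) ^ (2 / d)) ^ k) ^ (-(1 / 2) : ℝ) = (2:ℝ) ^ ((k:ℝ) * (-1 / d)) := by
    intro k
    rw [hlam, ← Real.rpow_mul (by norm_num)]
    congr 1; ring
  have hUn : ∀ k s, ‖U k s‖ ≤ A * (((2:ℝ) ^ (2 / d)) ^ k) ^ (-(1 / 2) : ℝ) * c k s := by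
    intro k s
    rw [hnlam]
    have hc := hc0 k s
    refine le_of_sq_le_sq ?_ (by positivity)
    have h1 : ‖U k s‖ ^ 2 ≤ 2 * (2:ℝ) ^ ((k:ℝ) * (- 2 / d)) * c k s ^ 2 := by
      rw [hU, norm_toLp_sq]
      exact ENNReal.toReal_le_of_le_ofReal (by positivity) (hW2 k s)
    refine h1.trans ?_
    have h2 : ((2:ℝ) ^ ((k:ℝ) * (-1 / d))) ^ 2 = (2:ℝ) ^ ((k:ℝ) * (-2 / d)) := by
      rw [← Real.rpow_natCast, ← Real.rpow_mul (by norm_num)]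
      congr 1; push_cast; ring
    rw [mul_pow, mul_pow, h2]
    gcongr
    rw [hA]; nlinarith
  have hUi : ∀ k, Integrable (U k) := by
    intro k
    refine ((hci k).const_mul (A * (((2:ℝ) ^ (2 / d)) ^ k) ^ (-(1 / 2) : ℝ))).mono'
      (hUm k).aestronglyMeasurable (Filter.Eventually.of_forall (hUn k))
  have hUin : ∀ k l s t, s ≠ t → ‖inner ℂ (U k s) (U l t)‖ ≤
      A ^ 2 * (((2:ℝ) ^ (2 / d)) ^ k * ((2:ℝ) ^ (2 / d)) ^ l) ^ ((d / 2 - 1) / 2) *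
        |s - t| ^ (-(d / 2)) * (c k s * c l t) := by
    intro k l s t hst
    have h1 : inner ℂ (U k s) (U l t) =
        ∫ ξ, conj (𝓕 (G k s) ξ) * (gmul (2 * ε) (s - t) ξ * 𝓕 (G l t) ξ) := by
      rw [L2.inner_def]
      refine integral_congr_ae ?_
      filter_upwards [(hWL k s).coeFn_toLp, (hWL l t).coeFn_toLp] with ξ h1 h2
      simp only [hU]
      rw [h1, h2, ← conj_gmul_mul]
      simp only [hW, RCLike.inner_apply, map_mul]
      ring
    have h2 := dispersive (ε := 2 * ε) (by positivity) (sub_ne_zero.2 hst) (hGi k s) (hGi l t)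
    rw [h1]
    have h3 : (((2:ℝ) ^ (2 / d)) ^ k * ((2:ℝ) ^ (2 / d)) ^ l) ^ ((d / 2 - 1) / 2)
        = (2:ℝ) ^ ((k:ℝ) * (1 / 2 - 1 / d)) * (2:ℝ) ^ ((l:ℝ) * (1 / 2 - 1 / d)) := by
      rw [hlam, hlam, ← Real.rpow_add (by norm_num), ← Real.rpow_mul (by norm_num),
        ← Real.rpow_add (by norm_num)]
      congr 1; field_simp
    have habs : 0 < |s - t| := abs_pos.2 (sub_ne_zero.2 hst)
    have hck := hc0 k s
    have hcl := hc0 l t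
    calc _ ≤ (π / |s - t|) ^ (d / 2) * ((∫ x, ‖G k s x‖) * ∫ x, ‖G l t x‖) := h2
      _ ≤ (π / |s - t|) ^ (d / 2) * ((2 * (2:ℝ) ^ ((k:ℝ) * (1 / 2 - 1 / d)) * c k s) *
            (2 * (2:ℝ) ^ ((l:ℝ) * (1 / 2 - 1 / d)) * c l t)) := by
          gcongr
          · exact hG1 k s
          · exact hG1 l t
      _ = _ := by
          rw [hA2, h3, Real.div_rpow pi_pos.le habs.le, Real.rpow_neg habs.le]
          field_simp
          ring
  have hfin := hmain S A U c (by positivity) hUi hci hci2 hUn hUin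
  have hpair : ∀ k s, inner ℂ (hφ.toLp φ) (U k s) = ∫ x, G k s x * conj (hEvol ε φ s x) := by
    intro k s
    rw [hEvol, ← fourier_adj (hGi k s) (integrable_gmul_mul hε s hφ), L2.inner_def]
    refine integral_congr_ae ?_
    filter_upwards [(hWL k s).coeFn_toLp, hφ.coeFn_toLp] with ξ h1 h2
    simp only [hU]
    rw [h1, h2, map_mul, conj_gmul]
    simp only [hW, RCLike.inner_apply]
    ring
  have hsum : ∑ k ∈ S, ∫ s, ∫ x, G k s x * conj (hEvol ε φ s x)
      = inner ℂ (hφ.toLp φ) (∑ k ∈ S, ∫ s, U k s) := by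
    rw [inner_sum]
    refine Finset.sum_congr rfl fun k _ => ?_
    rw [← integral_inner (hUi k)]
    simp_rw [hpair]
  rw [hsum]
  calc _ ≤ (‖hφ.toLp φ‖ * ‖∑ k ∈ S, ∫ s, U k s‖) ^ 2 := by
        gcongr; exact norm_inner_le_norm _ _
    _ = (∫⁻ ξ, ‖φ ξ‖ₑ ^ 2).toReal * ‖∑ k ∈ S, ∫ s, U k s‖ ^ 2 := by rw [mul_pow, norm_toLp_sq hφ]
    _ ≤ (∫⁻ ξ, ‖φ ξ‖ₑ ^ 2).toReal * (K * A ^ 2 * ∑ k ∈ S, ∫ s, c k s ^ 2) := by gcongr; exact hfin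
    _ = _ := by ring

end Atoms

/-! ### The endpoint estimate localised to sets of dyadic measure -/

section Local

open ComplexConjugate

variable {V : Type*} [NormedAddCommGroup V] [InnerProductSpace ℝ V] [MeasurableSpace V]
  [BorelSpace V] [FiniteDimensional ℝ V]

/-- The mass of the regularised evolution on the time slice of a set. -/
noncomputable def sliceMass (ε : ℝ) (φ : V → ℂ) (A : Set (ℝ × V)) (τ : ℝ) : ℝ≥0∞ :=
  ∫⁻ x in Prod.mk τ ⁻¹' A, ‖hEvol ε φ τ x‖ₑ

lemma measurable_sliceMass (ε : ℝ) {φ : V → ℂ} (hφ : Measurable φ) {A : Set (ℝ × V)}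
    (hA : MeasurableSet A) : Measurable (sliceMass ε φ A) := by
  have h1 : Measurable (A.indicator fun p : ℝ × V => ‖hEvol ε φ p.1 p.2‖ₑ) :=
    (measurable_hEvol ε hφ).enorm.indicator hA
  convert h1.lintegral_prod_right' (ν := (volume : Measure V)) using 1
  ext τ
  rw [sliceMass, ← lintegral_indicator (measurable_prodMk_left hA)]
  rfl

lemma sliceMass_le {ε : ℝ} {φ : V → ℂ} {A : Set (ℝ × V)} {τ v : ℝ}
    (hv : volume (Prod.mk τ ⁻¹' A) ≤ ENNReal.ofReal v) :
    sliceMass ε φ A τ ≤ ENNReal.ofReal ((∫ ξ, ‖gmul ε 0 ξ * φ ξ‖) * v) := by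
  have hM : 0 ≤ ∫ ξ, ‖gmul ε 0 ξ * φ ξ‖ := integral_nonneg fun _ => norm_nonneg _
  calc sliceMass ε φ A τ ≤ ∫⁻ x in Prod.mk τ ⁻¹' A, ENNReal.ofReal (∫ ξ, ‖gmul ε 0 ξ * φ ξ‖) := by
        refine lintegral_mono fun x => ?_
        rw [← ofReal_norm]
        exact ENNReal.ofReal_le_ofReal (hEvol_bdd φ τ x)
    _ ≤ _ := by
        rw [setLIntegral_const, ENNReal.ofReal_mul hM]
        gcongr

set_option maxHeartbeats 1000000 in
/-- The endpoint estimate in localised form: an `ℓ²` bound for the masses of a free evolution on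
sets of dyadic measure, square integrated in time. -/
theorem local_endpoint (hd : 3 ≤ Module.finrank ℝ V) :
    ∃ K : ℝ, 0 ≤ K ∧ ∀ (ε : ℝ) (S : Finset ℤ) (A : ℤ → Set (ℝ × V)) (φ : V → ℂ),
      0 < ε → MemLp φ 2 → Measurable φ → (∀ m, MeasurableSet (A m)) →
      (∀ m τ, volume (Prod.mk τ ⁻¹' A m) ≤ ENNReal.ofReal ((2:ℝ) ^ ((m:ℝ) + 1))) →
      ∑ m ∈ S, ∫⁻ τ, (ENNReal.ofReal ((2:ℝ) ^ (-(m:ℝ) * (1 / 2 + 1 / (Module.finrank ℝ V : ℝ))))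
          * sliceMass ε φ (A m) τ) ^ 2 ≤ ENNReal.ofReal K * ∫⁻ ξ, ‖φ ξ‖ₑ ^ 2 := by
  obtain ⟨K, hK, hmain⟩ := atomic_strichartz (V := V) hd
  refine ⟨K, hK, ?_⟩
  intro ε S A φ hε hφ hφm hA hvol
  obtain ⟨w, hw⟩ : ∃ w : ℤ → ℝ, ∀ m : ℤ,
    w m = (2:ℝ) ^ (-(m:ℝ) * (1 / 2 + 1 / (Module.finrank ℝ V : ℝ))) := ⟨_, fun _ => rfl⟩
  have hw0 : ∀ m, 0 < w m := fun m => by rw [hw]; positivity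
  have hsm := fun m => measurable_sliceMass ε hφm (hA m)
  have hsf : ∀ m τ, sliceMass ε φ (A m) τ ≠ ∞ := fun m τ =>
    ((sliceMass_le (hvol m τ)).trans_lt ENNReal.ofReal_lt_top).ne
  have hφf : ∫⁻ ξ, ‖φ ξ‖ₑ ^ 2 ≠ ∞ := by
    have := hφ.2
    rw [eLpNorm_lt_top_iff_lintegral_rpow_enorm_lt_top (by simp) (by simp)] at this
    simpa using this.ne
  have hhm := measurable_hEvol ε hφm
  -- Truncation to `|τ| ≤ T` makes all time integrals finite, so that the absorption below is legal.
  have key : ∀ T : ℕ, ∑ m ∈ S, ∫⁻ τ in Set.Icc (-(T:ℝ)) T,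
      (ENNReal.ofReal (w m) * sliceMass ε φ (A m) τ) ^ 2
        ≤ ENNReal.ofReal K * ∫⁻ ξ, ‖φ ξ‖ₑ ^ 2 := by
    intro T
    obtain ⟨c, hc⟩ : ∃ c : ℤ → ℝ → ℝ, c = fun m => (Set.Icc (-(T:ℝ)) T).indicator
      fun τ => w m * (sliceMass ε φ (A m) τ).toReal := ⟨_, rfl⟩
    have hcm : ∀ m, Measurable (c m) := fun m => by
      rw [hc]; exact ((hsm m).ennreal_toReal.const_mul _).indicator measurableSet_Icc
    have hc0 : ∀ m s, 0 ≤ c m s := fun m s => by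
      rw [hc]; exact Set.indicator_nonneg (fun _ _ => mul_nonneg (hw0 m).le ENNReal.toReal_nonneg) _
    obtain ⟨B, hB⟩ : ∃ B : ℤ → ℝ, ∀ m τ, w m * (sliceMass ε φ (A m) τ).toReal ≤ B m := by
      refine ⟨fun m => w m * ((∫ ξ, ‖gmul ε 0 ξ * φ ξ‖) * (2:ℝ) ^ ((m:ℝ) + 1)), fun m τ => ?_⟩
      exact mul_le_mul_of_nonneg_left (ENNReal.toReal_le_of_le_ofReal
        (mul_nonneg (integral_nonneg fun _ => norm_nonneg _) (by positivity))
        (sliceMass_le (hvol m τ))) (hw0 m).le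
    have hcint : ∀ p : ℕ, p ≠ 0 → ∀ m, Integrable fun s => c m s ^ p := by
      intro p hp m
      have hi : Integrable ((Set.Icc (-(T:ℝ)) T).indicator fun _ => B m ^ p) :=
        (integrable_indicator_iff measurableSet_Icc).2 (integrableOn_const (by simp))
      refine hi.mono' ((hcm m).pow_const p).aestronglyMeasurable (Filter.Eventually.of_forall ?_)
      intro s
      rw [Real.norm_of_nonneg (pow_nonneg (hc0 m s) p), hc]
      by_cases hs : s ∈ Set.Icc (-(T:ℝ)) T
      · simp only [Set.indicator_of_mem hs]
        have := hw0 m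
        gcongr
        exact hB m s
      · simp only [Set.indicator_of_notMem hs]
        rw [zero_pow hp]
    -- The atoms extremal for the pairing: `G m` has the phase of the evolution on `A m`, and its height
    -- is chosen so that its pairing with the evolution is `c m s ^ 2`.
    obtain ⟨G, hG⟩ : ∃ G : ℤ → ℝ → V → ℂ, ∀ m s x, G m s x = (A m).indicator (fun _ => (1:ℂ)) (s, x) *
        (((w m * c m s : ℝ) : ℂ) * (hEvol ε φ s x / (‖hEvol ε φ s x‖ : ℂ))) :=
      ⟨_, fun _ _ _ => rfl⟩
    have hGm : ∀ m, Measurable (Function.uncurry (G m)) := by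
      intro m
      have h1 : Measurable fun p : ℝ × V => (A m).indicator (fun _ => (1:ℂ)) p :=
        measurable_const.indicator (hA m)
      have h2 : Measurable fun p : ℝ × V => ((w m * c m p.1 : ℝ) : ℂ) :=
        Complex.measurable_ofReal.comp (((hcm m).comp measurable_fst).const_mul _)
      have h3 : Measurable fun p : ℝ × V => hEvol ε φ p.1 p.2 := hhm
      have h4 := h1.mul (h2.mul (h3.div (Complex.measurable_ofReal.comp h3.norm)))
      convert h4 using 1
      ext p
      exact hG m p.1 p.2
    have hGb : ∀ m s x, ‖G m s x‖ ≤
        (2:ℝ) ^ (-(m:ℝ) * (1 / 2 + 1 / (Module.finrank ℝ V : ℝ))) * c m s := by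
      intro m s x
      have h0 : 0 ≤ w m * c m s := mul_nonneg (hw0 m).le (hc0 m s)
      rw [← hw, hG, norm_mul, norm_mul, norm_div, Complex.norm_real, Complex.norm_real, norm_norm,
        Real.norm_of_nonneg h0]
      have h1 : ‖(A m).indicator (fun _ => (1:ℂ)) (s, x)‖ ≤ 1 := by
        by_cases h : (s, x) ∈ A m <;> simp [h]
      have h2 : ‖hEvol ε φ s x‖ / ‖hEvol ε φ s x‖ ≤ 1 := div_self_le_one _
      calc _ ≤ 1 * (w m * c m s * 1) := by gcongr
        _ = _ := by ring
    have hGs : ∀ m s, volume (Function.support (G m s)) ≤ ENNReal.ofReal ((2:ℝ) ^ ((m:ℝ) + 1)) := by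
      intro m s
      refine (measure_mono fun x hx => ?_).trans (hvol m s)
      by_contra h
      apply hx
      rw [hG, Set.indicator_of_notMem (by simpa using h), zero_mul]
    have hpair : ∀ m s, ∫ x, G m s x * conj (hEvol ε φ s x) = ((c m s ^ 2 : ℝ) : ℂ) := by
      intro m s
      have h1 : ∀ x, G m s x * conj (hEvol ε φ s x) =
          ((w m * c m s * (Prod.mk s ⁻¹' A m).indicator (fun x => ‖hEvol ε φ s x‖) x : ℝ) : ℂ) := by
        intro x
        rw [hG]
        by_cases h : (s, x) ∈ A m
        · rw [Set.indicator_of_mem h, Set.indicator_of_mem (by simpa using h)]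
          rcases eq_or_ne (hEvol ε φ s x) 0 with h0 | h0
          · simp [h0]
          · have hn : (‖hEvol ε φ s x‖ : ℂ) ≠ 0 := by simpa using h0
            have h2 : hEvol ε φ s x * conj (hEvol ε φ s x) = (‖hEvol ε φ s x‖ : ℂ) ^ 2 :=
              Complex.mul_conj' _
            push_cast
            rw [one_mul, mul_assoc, div_mul_eq_mul_div, h2, sq, mul_div_assoc, div_self hn, mul_one]
        · rw [Set.indicator_of_notMem h, Set.indicator_of_notMem (by simpa using h)]
          simp
      simp_rw [h1]
      rw [integral_complex_ofReal, integral_const_mul, integral_indicator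
        (measurable_prodMk_left (hA m)), integral_norm_eq_lintegral_enorm
        (hhm.of_uncurry_left).aestronglyMeasurable]
      congr 1
      change w m * c m s * (sliceMass ε φ (A m) s).toReal = _
      rw [hc]
      by_cases hs : s ∈ Set.Icc (-(T:ℝ)) T
      · simp only [Set.indicator_of_mem hs]; ring
      · simp only [Set.indicator_of_notMem hs]; ring
    have hfin := hmain ε S G c φ hε hφ hGm (by simpa using hcint 1 one_ne_zero)
      (hcint 2 two_ne_zero) hc0 hGb hGs
    simp_rw [hpair] at hfin
    obtain ⟨X, hX⟩ : ∃ X : ℝ, X = ∑ m ∈ S, ∫ s, c m s ^ 2 := ⟨_, rfl⟩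
    have hX0 : 0 ≤ X := by
      rw [hX]; exact Finset.sum_nonneg fun m _ => integral_nonneg fun s => sq_nonneg _
    have hXc : ‖∑ m ∈ S, ∫ s, ((c m s ^ 2 : ℝ) : ℂ)‖ = X := by
      simp_rw [integral_complex_ofReal]
      rw [← Complex.ofReal_sum, ← hX, Complex.norm_real, Real.norm_of_nonneg hX0]
    rw [hXc, ← hX] at hfin
    -- The atomic estimate reads `X² ≤ K‖φ‖² X`.
    have hXle : X ≤ K * (∫⁻ ξ, ‖φ ξ‖ₑ ^ 2).toReal := by
      rcases hX0.eq_or_lt with h | h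
      · rw [← h]; positivity
      · rw [sq] at hfin; exact le_of_mul_le_mul_right hfin h
    calc _ = ENNReal.ofReal X := by
          rw [hX, ENNReal.ofReal_sum_of_nonneg fun m _ => integral_nonneg fun s => sq_nonneg _]
          refine Finset.sum_congr rfl fun m _ => ?_
          rw [ofReal_integral_eq_lintegral_ofReal (hcint 2 two_ne_zero m)
            (Filter.Eventually.of_forall fun s => sq_nonneg _),
            ← lintegral_indicator measurableSet_Icc]
          refine lintegral_congr fun s => ?_
          rw [hc]
          by_cases hs : s ∈ Set.Icc (-(T:ℝ)) T
          · simp only [Set.indicator_of_mem hs]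
            rw [ENNReal.ofReal_pow (mul_nonneg (hw0 m).le ENNReal.toReal_nonneg),
              ENNReal.ofReal_mul (hw0 m).le, ENNReal.ofReal_toReal (hsf m s)]
          · simp only [Set.indicator_of_notMem hs]; simp
      _ ≤ ENNReal.ofReal (K * (∫⁻ ξ, ‖φ ξ‖ₑ ^ 2).toReal) := ENNReal.ofReal_le_ofReal hXle
      _ = _ := by rw [ENNReal.ofReal_mul hK, ENNReal.ofReal_toReal hφf]
  have hcov : AECover (volume : Measure ℝ) Filter.atTop fun T : ℕ => Set.Icc (-(T:ℝ)) T :=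
    aecover_Icc (Filter.tendsto_neg_atTop_atBot.comp tendsto_natCast_atTop_atTop)
      tendsto_natCast_atTop_atTop
  have hlim := tendsto_finsetSum S fun m _ =>
    hcov.lintegral_tendsto_of_countably_generated
      (f := fun τ => (ENNReal.ofReal (w m) * sliceMass ε φ (A m) τ) ^ 2)
      (((hsm m).const_mul _).pow_const 2).aemeasurable
  simp_rw [← hw]
  exact le_of_tendsto' hlim key

end Local

/-! ### Distribution function and decreasing rearrangement -/

section Rearrangement

variable {n : ℕ} {f : EuclideanSpace ℝ (Fin n) → ℂ}

lemma distFn_anti : Antitone (distFn f) := fun _ _ h =>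
  measure_mono fun _ hx => lt_of_le_of_lt h hx

/-- Chebyshev's inequality. -/
lemma mul_distFn_le (hf : Integrable f) {l : ℝ} (hl : 0 < l) :
    distFn f l ≤ (∫⁻ x, ‖f x‖ₑ) / ENNReal.ofReal l := by
  rw [ENNReal.le_div_iff_mul_le (by simp [hl]) (by simp), mul_comm]
  refine le_trans ?_ (mul_meas_ge_le_lintegral₀ hf.1.enorm (ENNReal.ofReal l))
  refine mul_le_mul_right (measure_mono fun x hx => ?_) _
  change ENNReal.ofReal l ≤ ‖f x‖ₑ
  rw [← ofReal_norm]
  exact ENNReal.ofReal_le_ofReal (le_of_lt hx)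

lemma distFn_lt_top (hf : Integrable f) {l : ℝ} (hl : 0 < l) : distFn f l < ∞ :=
  (mul_distFn_le hf hl).trans_lt (ENNReal.div_lt_top hf.2.ne (by simp [hl]))

lemma rearr_nonneg (t : ℝ) : 0 ≤ rearr f t := Real.sInf_nonneg fun _ h => h.1.le

lemma rearr_le {t l : ℝ} (hl : 0 < l) (h : distFn f l ≤ ENNReal.ofReal t) : rearr f t ≤ l :=
  csInf_le ⟨0, fun _ h => h.1.le⟩ ⟨hl, h⟩

lemma rearr_nonempty (hf : Integrable f) {t : ℝ} (ht : 0 < t) :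
    {l : ℝ | 0 < l ∧ distFn f l ≤ ENNReal.ofReal t}.Nonempty := by
  have hI : (∫⁻ x, ‖f x‖ₑ) ≠ ∞ := hf.2.ne
  have hp : 0 < (∫⁻ x, ‖f x‖ₑ).toReal / t + 1 := by positivity
  refine ⟨(∫⁻ x, ‖f x‖ₑ).toReal / t + 1, hp, (mul_distFn_le hf hp).trans ?_⟩
  refine ENNReal.div_le_of_le_mul ?_
  rw [← ENNReal.ofReal_mul ht.le]
  refine (ENNReal.ofReal_toReal hI).symm.le.trans (ENNReal.ofReal_le_ofReal ?_)
  rw [mul_add, mul_div_cancel₀ _ ht.ne']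
  linarith

lemma rearr_anti (hf : Integrable f) {s t : ℝ} (hs : 0 < s) (hst : s ≤ t) :
    rearr f t ≤ rearr f s :=
  csInf_le_csInf ⟨0, fun _ h => h.1.le⟩ (rearr_nonempty hf hs)
    fun _ h => ⟨h.1, h.2.trans (ENNReal.ofReal_le_ofReal hst)⟩

lemma distFn_le_of_rearr_lt (hf : Integrable f) {t l : ℝ} (ht : 0 < t) (h : rearr f t < l) :
    distFn f l ≤ ENNReal.ofReal t := by
  obtain ⟨l', hl', hlt⟩ := exists_lt_of_csInf_lt (rearr_nonempty hf ht) h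
  exact (distFn_anti hlt.le).trans hl'.2

/-- The infimum in the definition of the rearrangement is attained, the distribution function
being right-continuous. -/
lemma distFn_rearr_le (hf : Integrable f) {t : ℝ} (ht : 0 < t) :
    distFn f (rearr f t) ≤ ENNReal.ofReal t := by
  have hU : {x | rearr f t < ‖f x‖} = ⋃ k : ℕ, {x | rearr f t + 1 / ((k:ℝ) + 1) < ‖f x‖} := by
    ext x
    simp only [Set.mem_iUnion, Set.mem_ofPred_eq]
    constructor
    · intro h
      obtain ⟨k, hk⟩ := exists_nat_one_div_lt (sub_pos.2 h)
      exact ⟨k, by linarith⟩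
    · rintro ⟨k, hk⟩
      have : 0 < 1 / ((k:ℝ) + 1) := by positivity
      linarith
  rw [distFn, hU, Monotone.measure_iUnion]
  · refine iSup_le fun k => distFn_le_of_rearr_lt hf ht ?_
    have : 0 < 1 / ((k:ℝ) + 1) := by positivity
    linarith
  · intro i j hij x hx
    have hx' : rearr f t + 1 / ((i:ℝ) + 1) < ‖f x‖ := hx
    change rearr f t + 1 / ((j:ℝ) + 1) < ‖f x‖
    refine lt_of_le_of_lt ?_ hx'
    have : 1 / ((j:ℝ) + 1) ≤ 1 / ((i:ℝ) + 1) := by gcongr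
    linarith

/-- The dyadic level sets of the rearrangement exhaust the support. -/
lemma ae_exists_dyadic (hf : Integrable f) :
    ∀ᵐ x, f x ≠ 0 → ∃ m : ℤ, rearr f ((2:ℝ) ^ (m + 1)) < ‖f x‖ ∧ ‖f x‖ ≤ rearr f ((2:ℝ) ^ m) := by
  -- Above every rearrangement level lies only a null set, since `|{|f| > f*(2^{-k})}| ≤ 2^{-k}`.
  have h0 : volume {x | ∀ m : ℤ, rearr f ((2:ℝ) ^ m) < ‖f x‖} = 0 := by
    refine le_antisymm ?_ (zero_le)
    refine ge_of_tendsto' (f := fun k : ℕ => ENNReal.ofReal ((1/2:ℝ) ^ k)) (x := Filter.atTop) ?_ ?_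
    · rw [← ENNReal.ofReal_zero]
      exact ENNReal.tendsto_ofReal (tendsto_pow_atTop_nhds_zero_of_lt_one (by norm_num) (by norm_num))
    · intro k
      have h2 : (1/2:ℝ) ^ k = (2:ℝ) ^ (-(k:ℤ)) := by simp
      rw [h2]
      have hsub : {x | ∀ m : ℤ, rearr f ((2:ℝ) ^ m) < ‖f x‖} ⊆
          {x | rearr f ((2:ℝ) ^ (-(k:ℤ))) < ‖f x‖} := fun x hx => by
        have hx' : ∀ m : ℤ, rearr f ((2:ℝ) ^ m) < ‖f x‖ := hx
        exact hx' _
      exact (measure_mono hsub).trans (distFn_rearr_le hf (by positivity))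
  have h1 : ∀ᵐ x, ¬ ∀ m : ℤ, rearr f ((2:ℝ) ^ m) < ‖f x‖ := by
    rw [ae_iff]; simpa using h0
  filter_upwards [h1] with x hx hfx
  push Not at hx
  have hpos : 0 < ‖f x‖ / 2 := by positivity
  -- Integrability makes `f*(2^k)` tend to `0`, so the `m` with `|f x| ≤ f*(2^m)` are bounded
  -- above and there is a largest one.
  obtain ⟨k, hk⟩ := pow_unbounded_of_one_lt (distFn f (‖f x‖ / 2)).toReal (one_lt_two)
  have hk2 : rearr f ((2:ℝ) ^ (k:ℤ)) ≤ ‖f x‖ / 2 := by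
    refine rearr_le hpos ?_
    rw [← ENNReal.ofReal_toReal (distFn_lt_top hf hpos).ne]
    refine ENNReal.ofReal_le_ofReal ?_
    rw [zpow_natCast]; exact hk.le
  obtain ⟨m, hm, hmax⟩ := Int.exists_greatest_of_bdd
    (P := fun m : ℤ => ‖f x‖ ≤ rearr f ((2:ℝ) ^ m)) ⟨k, fun z hz => by
      by_contra! hlt
      have := rearr_anti hf (s := (2:ℝ) ^ (k:ℤ)) (t := (2:ℝ) ^ z) (by positivity)
        (zpow_le_zpow_right₀ one_le_two hlt.le)
      linarith⟩ hx
  refine ⟨m, ?_, hm⟩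
  by_contra! h
  have := hmax _ h
  omega

/-- The Lorentz norm dominates its dyadic `ℓ²` form: `f*` is decreasing, so its value at `2^m` is
controlled by its values on `(2^{m-1}, 2^m]`. The constant is uniform for `0 ≤ a ≤ 1`. -/
lemma tsum_dyadic_le (hf : Integrable f) {a : ℝ} (ha0 : 0 ≤ a) (ha : a ≤ 1) :
    ∑' m : ℤ, ENNReal.ofReal ((2:ℝ) ^ ((m:ℝ) * a) * rearr f ((2:ℝ) ^ m)) ^ 2 ≤
      8 * ∫⁻ t in Set.Ioi (0:ℝ), ENNReal.ofReal (t ^ a * rearr f t) ^ 2 / ENNReal.ofReal t := by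
  obtain ⟨g, hg⟩ : ∃ g : ℝ → ℝ≥0∞, ∀ t, g t =
    ENNReal.ofReal (t ^ a * rearr f t) ^ 2 / ENNReal.ofReal t := ⟨_, fun _ => rfl⟩
  simp_rw [← hg]
  have hterm : ∀ m : ℤ, ENNReal.ofReal ((2:ℝ) ^ ((m:ℝ) * a) * rearr f ((2:ℝ) ^ m)) ^ 2 ≤
      8 * ∫⁻ t in Set.Ioc ((2:ℝ) ^ (m - 1)) ((2:ℝ) ^ m), g t := by
    intro m
    have h2m : (0:ℝ) < (2:ℝ) ^ m := by positivity
    have h2m1 : (2:ℝ) ^ (m - 1) = 2 ^ m / 2 := by rw [zpow_sub_one₀ two_ne_zero]; ring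
    have hr := rearr_nonneg (f := f) ((2:ℝ) ^ m)
    obtain ⟨r, hrr⟩ : ∃ r, r = rearr f ((2:ℝ) ^ m) := ⟨_, rfl⟩
    rw [← hrr] at hr ⊢
    have hlow : ∀ t ∈ Set.Ioc ((2:ℝ) ^ (m - 1)) ((2:ℝ) ^ m),
        ENNReal.ofReal (((2:ℝ) ^ ((m:ℝ) * a) / 2 * r) ^ 2 / 2 ^ m) ≤ g t := by
      intro t ht
      have ht0 : 0 < t := lt_trans (by positivity) ht.1
      have hra : r ≤ rearr f t := hrr ▸ rearr_anti hf ht0 ht.2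
      have hta : (2:ℝ) ^ ((m:ℝ) * a) / 2 ≤ t ^ a := by
        calc (2:ℝ) ^ ((m:ℝ) * a) / 2 ≤ (2:ℝ) ^ ((m:ℝ) * a) / 2 ^ a := by
              have : (2:ℝ) ^ a ≤ 2 ^ (1:ℝ) := Real.rpow_le_rpow_of_exponent_le one_le_two ha
              rw [Real.rpow_one] at this
              gcongr
          _ = ((2:ℝ) ^ (m - 1)) ^ a := by
              rw [h2m1, Real.div_rpow h2m.le zero_le_two, Real.rpow_mul zero_le_two,
                Real.rpow_intCast]
          _ ≤ t ^ a := Real.rpow_le_rpow (by positivity) ht.1.le ha0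
      rw [hg, ← ENNReal.ofReal_pow (mul_nonneg (by positivity) (rearr_nonneg t)),
        ← ENNReal.ofReal_div_of_pos ht0]
      refine ENNReal.ofReal_le_ofReal ?_
      have := ht.2
      gcongr
    have hint : ENNReal.ofReal (((2:ℝ) ^ ((m:ℝ) * a) / 2 * r) ^ 2 / 2 ^ m) *
        ENNReal.ofReal ((2:ℝ) ^ m / 2) ≤ ∫⁻ t in Set.Ioc ((2:ℝ) ^ (m - 1)) ((2:ℝ) ^ m), g t := by
      have := setLIntegral_mono' (μ := (volume : Measure ℝ)) measurableSet_Ioc hlow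
      rw [setLIntegral_const, Real.volume_Ioc] at this
      convert this using 3
      rw [h2m1]; ring
    calc _ = 8 * (ENNReal.ofReal (((2:ℝ) ^ ((m:ℝ) * a) / 2 * r) ^ 2 / 2 ^ m) *
        ENNReal.ofReal ((2:ℝ) ^ m / 2)) := by
          rw [← ENNReal.ofReal_mul (by positivity), show (8:ℝ≥0∞) = ENNReal.ofReal 8 by simp,
            ← ENNReal.ofReal_mul (by norm_num), ← ENNReal.ofReal_pow (by positivity)]
          congr 1
          field_simp
          ring
      _ ≤ _ := by gcongr
  calc _ ≤ ∑' m : ℤ, 8 * ∫⁻ t in Set.Ioc ((2:ℝ) ^ (m - 1)) ((2:ℝ) ^ m), g t :=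
        ENNReal.tsum_le_tsum hterm
    _ = 8 * ∫⁻ t in ⋃ m : ℤ, Set.Ioc ((2:ℝ) ^ (m - 1)) ((2:ℝ) ^ m), g t := by
        rw [ENNReal.tsum_mul_left, lintegral_iUnion (fun _ => measurableSet_Ioc)]
        intro i j hij
        wlog h : i < j generalizing i j
        · exact (this hij.symm (lt_of_le_of_ne (not_lt.1 h) hij.symm)).symm
        refine Set.disjoint_left.2 fun t ht ht' => ?_
        have : (2:ℝ) ^ i ≤ 2 ^ (j - 1) := zpow_le_zpow_right₀ one_le_two (by omega)
        exact absurd (ht.2.trans this) (not_le.2 ht'.1)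
    _ ≤ _ := by
        gcongr
        exact Set.iUnion_subset fun m t ht => lt_trans (by positivity) ht.1

lemma measurable_rearr_param {F : ℝ → EuclideanSpace ℝ (Fin n) → ℂ}
    (hF : Measurable (Function.uncurry F)) (hi : ∀ τ, Integrable (F τ)) {t : ℝ} (ht : 0 < t) :
    Measurable fun τ => rearr (F τ) t := by
  have hd : ∀ l : ℝ, Measurable fun τ => distFn (F τ) l := fun l =>
    measurable_measure_prodMk_left (measurableSet_lt (measurable_const (a := l)) hF.norm)
  refine measurable_of_Iio fun a => ?_
  have : (fun τ => rearr (F τ) t) ⁻¹' Set.Iio a = ⋃ (q : ℚ) (_ : 0 < (q:ℝ) ∧ (q:ℝ) < a),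
      {τ | distFn (F τ) q ≤ ENNReal.ofReal t} := by
    ext τ
    simp only [Set.mem_preimage, Set.mem_Iio, Set.mem_iUnion, Set.mem_ofPred_eq]
    constructor
    · intro h
      obtain ⟨q, hq1, hq2⟩ := exists_rat_btwn h
      exact ⟨q, ⟨(rearr_nonneg t).trans_lt hq1, hq2⟩, distFn_le_of_rearr_lt (hi τ) ht hq1⟩
    · rintro ⟨q, ⟨hq0, hqa⟩, hq⟩
      exact (rearr_le hq0 hq).trans_lt hqa
  rw [this]
  exact MeasurableSet.iUnion fun q => MeasurableSet.iUnion fun _ =>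
    measurableSet_le (hd q) measurable_const

end Rearrangement

/-! ### The bilinear estimate for all admissible pairs -/

section DualForm

variable {n : ℕ}

/-- The square `∫₀^∞ (t^a f*(t))² dt/t` of the Lorentz quasinorm of `L^{1/a,2}`. -/
noncomputable def lorSq (a : ℝ) (f : EuclideanSpace ℝ (Fin n) → ℂ) : ℝ≥0∞ :=
  ∫⁻ t in Set.Ioi (0:ℝ), ENNReal.ofReal (t ^ a * rearr f t) ^ 2 / ENNReal.ofReal t

/-- Hölder's inequality for three sequences, with exponents `1/p`, `1/q` and `1/r`. -/
lemma holder3 {x y z : ℤ → ℝ≥0∞} {p q r : ℝ} (hp : 0 ≤ p) (hq : 0 ≤ q) (hr : 0 ≤ r)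
    (h : p + q + r = 1) :
    ∑' m, x m ^ p * y m ^ q * z m ^ r ≤ (∑' m, x m) ^ p * (∑' m, y m) ^ q * (∑' m, z m) ^ r := by
  have := ENNReal.lintegral_prod_norm_pow_le (μ := (Measure.count : Measure ℤ)) Finset.univ
    (f := ![x, y, z]) (p := ![p, q, r])
    (fun _ _ => (Measurable.of_discrete).aemeasurable) (by simpa [Fin.sum_univ_three] using h)
    (by intro i _; fin_cases i <;> simpa)
  simpa [Fin.prod_univ_three, lintegral_count] using this

/-- Interpolation between the trivial `L²` bound and the endpoint weight on one dyadic block. -/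
lemma weight_split {θ d c m : ℝ} (hθ0 : 0 ≤ θ) (hθ1 : θ ≤ 1) (s : ℝ≥0∞) :
    ENNReal.ofReal c * s =
      (ENNReal.ofReal ((2:ℝ) ^ (m * (1 / 2 + θ / d)) * c) ^ 2) ^ (1 / 2 : ℝ) *
      ((ENNReal.ofReal ((2:ℝ) ^ (-m * (1 / 2))) * s) ^ 2) ^ ((1 - θ) / 2) *
      ((ENNReal.ofReal ((2:ℝ) ^ (-m * (1 / 2 + 1 / d))) * s) ^ 2) ^ (θ / 2) := by
  have hsq : ∀ (w : ℝ≥0∞) (e : ℝ), (w ^ 2) ^ (e / 2) = w ^ e := fun w e => by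
    rw [← ENNReal.rpow_natCast, ← ENNReal.rpow_mul]
    congr 1
    push_cast
    ring
  have h1 : 0 ≤ 1 - θ := by linarith
  rw [hsq, hsq, hsq, ENNReal.rpow_one, ENNReal.mul_rpow_of_nonneg _ _ h1,
    ENNReal.mul_rpow_of_nonneg _ _ hθ0, ENNReal.ofReal_rpow_of_pos (by positivity),
    ENNReal.ofReal_rpow_of_pos (by positivity), ← Real.rpow_mul zero_le_two,
    ← Real.rpow_mul zero_le_two, ENNReal.ofReal_mul (by positivity)]
  have hs : s ^ (1 - θ) * s ^ θ = s := by
    rw [← ENNReal.rpow_add_of_nonneg _ _ h1 hθ0]; simp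
  have hw : ENNReal.ofReal ((2:ℝ) ^ (m * (1 / 2 + θ / d))) *
      ENNReal.ofReal ((2:ℝ) ^ (-m * (1 / 2) * (1 - θ))) *
      ENNReal.ofReal ((2:ℝ) ^ (-m * (1 / 2 + 1 / d) * θ)) = 1 := by
    rw [← ENNReal.ofReal_mul (by positivity), ← ENNReal.ofReal_mul (by positivity),
      ← Real.rpow_add two_pos, ← Real.rpow_add two_pos]
    have : m * (1 / 2 + θ / d) + -m * (1 / 2) * (1 - θ) + -m * (1 / 2 + 1 / d) * θ = 0 := by
      ring
    rw [this]; simp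
  calc _ = 1 * ENNReal.ofReal c * (s ^ (1 - θ) * s ^ θ) := by rw [hs, one_mul]
    _ = _ := by rw [← hw]; ring

/-- Cauchy–Schwarz on a set of controlled measure. -/
lemma sq_setLIntegral_le {α : Type*} [MeasurableSpace α] {μ : Measure α} {A : Set α} {v : ℝ≥0∞}
    {g : α → ℝ≥0∞} (hg : Measurable g) (hv : μ A ≤ v) :
    (∫⁻ x in A, g x ∂μ) ^ 2 ≤ v * ∫⁻ x in A, g x ^ 2 ∂μ := by
  have h := ENNReal.lintegral_mul_norm_pow_le (μ := μ.restrict A) (f := fun _ => 1)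
    (g := fun x => g x ^ 2) aemeasurable_const (hg.pow_const 2).aemeasurable
    (p := 1 / 2) (q := 1 / 2) (by norm_num) (by norm_num) (by norm_num)
  have hr : ∀ w : ℝ≥0∞, (w ^ 2) ^ (1 / 2 : ℝ) = w := fun w => by
    rw [← ENNReal.rpow_natCast, ← ENNReal.rpow_mul]; simp
  have hr' : ∀ w : ℝ≥0∞, (w ^ (1 / 2 : ℝ)) ^ 2 = w := fun w => by
    rw [← ENNReal.rpow_natCast, ← ENNReal.rpow_mul]; simp
  simp only [hr, ENNReal.one_rpow, one_mul, lintegral_const, Measure.restrict_apply_univ] at h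
  calc _ ≤ ((μ A) ^ (1 / 2 : ℝ) * (∫⁻ x in A, g x ^ 2 ∂μ) ^ (1 / 2 : ℝ)) ^ 2 := by gcongr
    _ = μ A * ∫⁻ x in A, g x ^ 2 ∂μ := by rw [mul_pow, hr', hr']
    _ ≤ _ := by gcongr

/-- The bilinear form of the Strichartz estimate with the regularised evolution: each `F(τ)` is
cut along the dyadic levels of its rearrangement, and the pieces are paired with `hEvol`. -/
theorem dual_form (hn : 3 ≤ n) {θ : ℝ} (hθ0 : 0 ≤ θ) (hθ1 : θ ≤ 1) :
    ∃ K : ℝ, 0 ≤ K ∧ ∀ (ε : ℝ) (F : ℝ → EuclideanSpace ℝ (Fin n) → ℂ)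
      (φ : EuclideanSpace ℝ (Fin n) → ℂ), 0 < ε → Measurable (Function.uncurry F) →
      (∀ τ, Integrable (F τ)) → MemLp φ 2 → Measurable φ →
      ∫⁻ τ, ∫⁻ x, ‖F τ x‖ₑ * ‖hEvol ε φ τ x‖ₑ ≤ ENNReal.ofReal K *
        (∫⁻ τ, lorSq (1 / 2 + θ / n) (F τ) ^ (1 / 2 * (1 / (1 - θ / 2)))) ^ (1 - θ / 2) *
        (∫⁻ ξ, ‖φ ξ‖ₑ ^ 2) ^ (1 / 2 : ℝ) := by
  have hfr : Module.finrank ℝ (EuclideanSpace ℝ (Fin n)) = n := by simp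
  obtain ⟨K, hK, hloc⟩ := local_endpoint (V := EuclideanSpace ℝ (Fin n)) (by rw [hfr]; exact hn)
  rw [hfr] at hloc
  refine ⟨8 ^ (1 / 2 : ℝ) * 2 ^ ((1 - θ) / 2) * K ^ (θ / 2), by positivity, ?_⟩
  intro ε F φ hε hF hi hφ hφm
  have hhm := measurable_hEvol ε hφm
  obtain ⟨Φ, hΦ⟩ : ∃ Φ, Φ = ∫⁻ ξ, ‖φ ξ‖ₑ ^ 2 := ⟨_, rfl⟩
  obtain ⟨lam, hlam⟩ : ∃ lam : ℤ → ℝ → ℝ, ∀ m τ, lam m τ = rearr (F τ) ((2:ℝ) ^ m) :=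
    ⟨_, fun _ _ => rfl⟩
  have hlm : ∀ m, Measurable (lam m) := fun m => by
    have := measurable_rearr_param hF hi (t := (2:ℝ) ^ m) (by positivity)
    convert this using 1
    ext τ; exact hlam m τ
  have hl0 : ∀ m τ, 0 ≤ lam m τ := fun m τ => by rw [hlam]; exact rearr_nonneg _
  have hlanti : ∀ τ {m k : ℤ}, m ≤ k → lam k τ ≤ lam m τ := fun τ m k h => by
    rw [hlam, hlam]
    exact rearr_anti (hi τ) (by positivity) (zpow_le_zpow_right₀ one_le_two h)
  -- `A m` is the part of space–time where `|F|` lies between consecutive dyadic rearrangement levels.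
  obtain ⟨A, hA⟩ : ∃ A : ℤ → Set (ℝ × EuclideanSpace ℝ (Fin n)), ∀ m p,
    p ∈ A m ↔ lam (m + 1) p.1 < ‖F p.1 p.2‖ ∧ ‖F p.1 p.2‖ ≤ lam m p.1 :=
    ⟨fun m => {p | lam (m + 1) p.1 < ‖F p.1 p.2‖ ∧ ‖F p.1 p.2‖ ≤ lam m p.1}, fun _ _ => Iff.rfl⟩
  have hAm : ∀ m, MeasurableSet (A m) := by
    intro m
    have h1 : MeasurableSet {p : ℝ × EuclideanSpace ℝ (Fin n) | lam (m + 1) p.1 < ‖F p.1 p.2‖} :=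
      measurableSet_lt ((hlm _).comp measurable_fst) hF.norm
    have h2 : MeasurableSet {p : ℝ × EuclideanSpace ℝ (Fin n) | ‖F p.1 p.2‖ ≤ lam m p.1} :=
      measurableSet_le hF.norm ((hlm _).comp measurable_fst)
    convert h1.inter h2 using 1
    ext p; exact hA m p
  have hAs : ∀ m τ, MeasurableSet (Prod.mk τ ⁻¹' A m) := fun m τ => measurable_prodMk_left (hAm m)
  have hvol : ∀ m τ, volume (Prod.mk τ ⁻¹' A m) ≤ ENNReal.ofReal ((2:ℝ) ^ ((m:ℝ) + 1)) := by
    intro m τ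
    have h1 : Prod.mk τ ⁻¹' A m ⊆ {x | rearr (F τ) ((2:ℝ) ^ (m + 1)) < ‖F τ x‖} := fun x hx => by
      have := ((hA m _).1 hx).1
      rw [hlam] at this
      exact this
    refine (measure_mono h1).trans ((distFn_rearr_le (hi τ) (by positivity)).trans_eq ?_)
    congr 1
    rw [← Real.rpow_intCast]; push_cast; rfl
  have hdisj : ∀ τ, Pairwise (Function.onFun Disjoint fun m => Prod.mk τ ⁻¹' A m) := by
    intro τ i j hij
    wlog h : i < j generalizing i j
    · exact (this hij.symm (lt_of_le_of_ne (not_lt.1 h) hij.symm)).symm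
    refine Set.disjoint_left.2 fun x hx hx' => ?_
    have h1 := ((hA i _).1 hx).1
    have h2 := ((hA j _).1 hx').2
    have h3 := hlanti τ (m := i + 1) (k := j) (by omega)
    exact absurd (h1.trans_le (h2.trans h3)) (lt_irrefl _)
  -- `X` is the dyadic Lorentz norm of `F τ`, `Z` the endpoint quantity for the evolution of `φ`.
  obtain ⟨X, hX⟩ : ∃ X : ℝ → ℝ≥0∞, ∀ τ, X τ = ∑' m : ℤ,
    ENNReal.ofReal ((2:ℝ) ^ ((m:ℝ) * (1 / 2 + θ / n)) * lam m τ) ^ 2 := ⟨_, fun _ => rfl⟩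
  obtain ⟨Z, hZ⟩ : ∃ Z : ℝ → ℝ≥0∞, ∀ τ, Z τ = ∑' m : ℤ,
    (ENNReal.ofReal ((2:ℝ) ^ (-(m:ℝ) * (1 / 2 + 1 / (n:ℝ)))) * sliceMass ε φ (A m) τ) ^ 2 :=
    ⟨_, fun _ => rfl⟩
  have hsm := fun m => measurable_sliceMass ε hφm (hAm m)
  have hZt : ∀ m : ℤ, Measurable fun τ =>
    (ENNReal.ofReal ((2:ℝ) ^ (-(m:ℝ) * (1 / 2 + 1 / (n:ℝ)))) * sliceMass ε φ (A m) τ) ^ 2 :=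
    fun m => ((hsm m).const_mul _).pow_const 2
  have hXm : Measurable X := by
    have : Measurable fun τ => ∑' m : ℤ,
        ENNReal.ofReal ((2:ℝ) ^ ((m:ℝ) * (1 / 2 + θ / n)) * lam m τ) ^ 2 :=
      Measurable.tsum fun m => (((hlm m).const_mul _).ennreal_ofReal).pow_const 2
    convert this using 1
    ext τ; exact hX τ
  have hZm : Measurable Z := by
    have : Measurable fun τ => ∑' m : ℤ, (ENNReal.ofReal
        ((2:ℝ) ^ (-(m:ℝ) * (1 / 2 + 1 / (n:ℝ)))) * sliceMass ε φ (A m) τ) ^ 2 := Measurable.tsum hZt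
    convert this using 1
    ext τ; exact hZ τ
  have hZint : ∫⁻ τ, Z τ ≤ ENNReal.ofReal K * Φ := by
    simp_rw [hZ]
    rw [lintegral_tsum fun m => (hZt m).aemeasurable, ENNReal.tsum_eq_iSup_sum]
    exact iSup_le fun S => hΦ ▸ hloc ε S A φ hε hφ hφm hAm hvol
  have hXle : ∀ τ, X τ ≤ 8 * lorSq (1 / 2 + θ / n) (F τ) := by
    intro τ
    rw [hX]
    simp_rw [hlam]
    have hn3 : (3:ℝ) ≤ n := by exact_mod_cast hn
    refine tsum_dyadic_le (hi τ) (by positivity) ?_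
    have : θ / n ≤ 1 / 2 := by
      rw [div_le_iff₀ (by linarith)]; linarith
    linarith
  -- The conservation of the `L²` norm, localised to the disjoint sets `A m`.
  have hY : ∀ τ, ∑' m : ℤ, (ENNReal.ofReal ((2:ℝ) ^ (-(m:ℝ) * (1 / 2))) *
      sliceMass ε φ (A m) τ) ^ 2 ≤ 2 * Φ := by
    intro τ
    have hgm : Measurable fun x => ‖hEvol ε φ τ x‖ₑ := (hhm.of_uncurry_left (x := τ)).enorm
    calc _ ≤ ∑' m : ℤ, 2 * ∫⁻ x in Prod.mk τ ⁻¹' A m, ‖hEvol ε φ τ x‖ₑ ^ 2 := by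
          refine ENNReal.tsum_le_tsum fun m => ?_
          have h1 := sq_setLIntegral_le hgm (hvol m τ)
          calc _ = ENNReal.ofReal ((2:ℝ) ^ (-(m:ℝ))) * (sliceMass ε φ (A m) τ) ^ 2 := by
                rw [mul_pow, ← ENNReal.ofReal_pow (by positivity), ← Real.rpow_natCast,
                  ← Real.rpow_mul zero_le_two]
                congr 3
                push_cast; ring
            _ ≤ ENNReal.ofReal ((2:ℝ) ^ (-(m:ℝ))) * (ENNReal.ofReal ((2:ℝ) ^ ((m:ℝ) + 1)) *
                ∫⁻ x in Prod.mk τ ⁻¹' A m, ‖hEvol ε φ τ x‖ₑ ^ 2) := by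
                gcongr; exact h1
            _ = _ := by
                rw [← mul_assoc, ← ENNReal.ofReal_mul (by positivity), ← Real.rpow_add two_pos]
                have : -(m:ℝ) + (m + 1) = 1 := by ring
                rw [this]; simp
      _ = 2 * ∫⁻ x in ⋃ m, Prod.mk τ ⁻¹' A m, ‖hEvol ε φ τ x‖ₑ ^ 2 := by
          rw [ENNReal.tsum_mul_left, lintegral_iUnion (fun m => hAs m τ) (hdisj τ)]
      _ ≤ 2 * ∫⁻ x, ‖hEvol ε φ τ x‖ₑ ^ 2 := by
          gcongr; exact Measure.restrict_le_self
      _ ≤ _ := by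
          rw [hΦ]; exact mul_le_mul_right (hEvol_l2 hε τ hφ) 2
  have hpt : ∀ τ, ∫⁻ x, ‖F τ x‖ₑ * ‖hEvol ε φ τ x‖ₑ ≤
      X τ ^ (1 / 2 : ℝ) * (2 * Φ) ^ ((1 - θ) / 2) * Z τ ^ (θ / 2) := by
    intro τ
    have hgm : Measurable fun x => ‖hEvol ε φ τ x‖ₑ := (hhm.of_uncurry_left (x := τ)).enorm
    calc _ = ∫⁻ x in ⋃ m, Prod.mk τ ⁻¹' A m, ‖F τ x‖ₑ * ‖hEvol ε φ τ x‖ₑ := by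
          rw [← lintegral_indicator (MeasurableSet.iUnion fun m => hAs m τ)]
          refine lintegral_congr_ae ?_
          filter_upwards [ae_exists_dyadic (hi τ)] with x hx
          by_cases h0 : F τ x = 0
          · by_cases hU : x ∈ ⋃ m, Prod.mk τ ⁻¹' A m
            · rw [Set.indicator_of_mem hU]
            · rw [Set.indicator_of_notMem hU]; simp [h0]
          · obtain ⟨m, hm⟩ := hx h0
            rw [Set.indicator_of_mem]
            refine Set.mem_iUnion.2 ⟨m, ?_⟩
            rw [Set.mem_preimage, hA, hlam, hlam]
            exact hm
      _ ≤ ∑' m, ∫⁻ x in Prod.mk τ ⁻¹' A m, ‖F τ x‖ₑ * ‖hEvol ε φ τ x‖ₑ := lintegral_iUnion_le _ _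
      _ ≤ ∑' m, ENNReal.ofReal (lam m τ) * sliceMass ε φ (A m) τ := by
          refine ENNReal.tsum_le_tsum fun m => ?_
          rw [sliceMass, ← lintegral_const_mul _ hgm]
          refine setLIntegral_mono' (hAs m τ) fun x hx => ?_
          gcongr
          rw [← ofReal_norm]
          exact ENNReal.ofReal_le_ofReal ((hA m _).1 hx).2
      _ = _ := tsum_congr fun m => weight_split (d := n) (m := m) hθ0 hθ1 _
      _ ≤ _ := holder3 (by norm_num) (by linarith) (by linarith) (by ring)
      _ ≤ _ := by
          rw [hX, hZ]
          gcongr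
          · exact hY τ
  have hb : 0 < 1 - θ / 2 := by linarith
  calc _ ≤ ∫⁻ τ, X τ ^ (1 / 2 : ℝ) * (2 * Φ) ^ ((1 - θ) / 2) * Z τ ^ (θ / 2) := lintegral_mono hpt
    _ = (2 * Φ) ^ ((1 - θ) / 2) *
        ∫⁻ τ, (X τ ^ (1 / 2 * (1 / (1 - θ / 2)))) ^ (1 - θ / 2) * Z τ ^ (θ / 2) := by
        rw [← lintegral_const_mul _ (by fun_prop)]
        refine lintegral_congr fun τ => ?_
        rw [← ENNReal.rpow_mul, mul_assoc (1 / 2 : ℝ), one_div_mul_cancel hb.ne', mul_one]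
        ring
    -- Hölder in time with weights `1 - θ/2` and `θ/2`.
    _ ≤ (2 * Φ) ^ ((1 - θ) / 2) * ((∫⁻ τ, X τ ^ (1 / 2 * (1 / (1 - θ / 2)))) ^ (1 - θ / 2) *
        (∫⁻ τ, Z τ) ^ (θ / 2)) := by
        gcongr
        exact ENNReal.lintegral_mul_norm_pow_le (by fun_prop) (by fun_prop) hb.le (by linarith)
          (by ring)
    _ ≤ (2 * Φ) ^ ((1 - θ) / 2) *
        ((∫⁻ τ, (8 * lorSq (1 / 2 + θ / n) (F τ)) ^ (1 / 2 * (1 / (1 - θ / 2)))) ^ (1 - θ / 2) *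
        (ENNReal.ofReal K * Φ) ^ (θ / 2)) := by
        gcongr with τ
        exact hXle τ
    _ = _ := by
        rw [← hΦ]
        have hp : 0 ≤ 1 / 2 * (1 / (1 - θ / 2)) := by positivity
        have h8 : (8:ℝ≥0∞) = ENNReal.ofReal 8 := by simp
        have h2 : (2:ℝ≥0∞) = ENNReal.ofReal 2 := by simp
        have h1θ : 0 ≤ (1 - θ) / 2 := by linarith
        have hθ2 : 0 ≤ θ / 2 := by linarith
        simp_rw [ENNReal.mul_rpow_of_nonneg _ _ hp]
        rw [lintegral_const_mul' _ _ (by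
            exact ENNReal.rpow_ne_top_of_nonneg hp (by simp)),
          ENNReal.mul_rpow_of_nonneg _ _ hb.le, ← ENNReal.rpow_mul, mul_assoc (1 / 2 : ℝ),
          one_div_mul_cancel hb.ne', mul_one, ENNReal.mul_rpow_of_nonneg _ _ h1θ,
          ENNReal.mul_rpow_of_nonneg _ _ hθ2, ENNReal.ofReal_mul (by positivity),
          ENNReal.ofReal_mul (by positivity), ← ENNReal.ofReal_rpow_of_nonneg hK hθ2,
          ← ENNReal.ofReal_rpow_of_pos (by norm_num), ← ENNReal.ofReal_rpow_of_pos (by norm_num),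
          ← h8, ← h2]
        have hΦs : Φ ^ (1 / 2 : ℝ) = Φ ^ ((1 - θ) / 2) * Φ ^ (θ / 2) := by
          rw [← ENNReal.rpow_add_of_nonneg _ _ h1θ hθ2]
          congr 1; ring
        rw [hΦs]
        ring

end DualForm

/-! ### Removal of the regularisation and duality -/

section Duality

open ComplexConjugate

variable {n : ℕ}

lemma memLp_two_of_lintegral {g : EuclideanSpace ℝ (Fin n) → ℂ} (hg : AEStronglyMeasurable g)
    (h : ∫⁻ x, ‖g x‖ₑ ^ 2 ≠ ∞) : MemLp g 2 := by
  refine ⟨hg, ?_⟩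
  rw [eLpNorm_lt_top_iff_lintegral_rpow_enorm_lt_top (by simp) (by simp)]
  simpa using h.lt_top

/-- Pairing a test function with one time slice of the unregularised evolution is controlled by
the regularised pairings as the regularisation is removed. -/
lemma pairing_le {f g : EuclideanSpace ℝ (Fin n) → ℂ} (τ : ℝ) (hf : Integrable f)
    (hff : Integrable (𝓕 f)) (hg : Integrable g) (hgg : MemLp (𝓕 g) 2) :
    ‖∫ x, g x * conj (𝓕⁻ (fun ξ => gmul 0 (-τ) ξ * 𝓕 f ξ) x)‖ₑ ≤
      Filter.liminf (fun k : ℕ => ∫⁻ x, ‖f x‖ₑ * ‖hEvol (1 / ((k:ℝ) + 1)) (𝓕 g) τ x‖ₑ)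
        Filter.atTop := by
  have hgm0 : ∀ s : ℝ, Measurable fun ξ : EuclideanSpace ℝ (Fin n) => gmul 0 s ξ := fun s =>
    (measurable_gmul 0).of_uncurry_left (x := s)
  have hψ : Integrable fun ξ => gmul 0 (-τ) ξ * 𝓕 f ξ :=
    hff.bdd_mul (hgm0 _).aestronglyMeasurable
      (Filter.Eventually.of_forall fun ξ => norm_gmul_le_one le_rfl _ _)
  have hlim : Filter.Tendsto (fun k : ℕ => ∫ ξ, 𝓕 g ξ * gmul (1 / ((k:ℝ) + 1)) τ ξ * conj (𝓕 f ξ))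
      Filter.atTop (nhds (∫ ξ, 𝓕 g ξ * gmul 0 τ ξ * conj (𝓕 f ξ))) := by
    refine tendsto_integral_of_dominated_convergence (fun ξ => (∫ x, ‖g x‖) * ‖𝓕 f ξ‖) ?_
      (hff.norm.const_mul _) ?_ ?_
    · intro k
      refine ((continuous_fourier hg).aestronglyMeasurable.mul ?_).mul
        (Complex.continuous_conj.comp_aestronglyMeasurable hff.1)
      exact ((measurable_gmul _).of_uncurry_left (x := τ)).aestronglyMeasurable
    · intro k
      refine Filter.Eventually.of_forall fun ξ => ?_
      rw [norm_mul, norm_mul, RCLike.norm_conj]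
      have h1 := norm_fourier_le g ξ
      have h2 := norm_gmul_le_one (V := EuclideanSpace ℝ (Fin n)) (ε := 1 / ((k:ℝ) + 1))
        (by positivity) τ ξ
      calc _ ≤ (∫ x, ‖g x‖) * 1 * ‖𝓕 f ξ‖ := by gcongr
        _ = _ := by rw [mul_one]
    · refine Filter.Eventually.of_forall fun ξ => ?_
      have hc : Continuous fun e : ℝ => gmul e τ ξ := by unfold gmul; fun_prop
      have := (hc.tendsto 0).comp (tendsto_one_div_add_atTop_nhds_zero_nat (𝕜 := ℝ))
      exact (this.const_mul _).mul_const _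
  have hreg : ∀ k : ℕ, ‖∫ ξ, 𝓕 g ξ * gmul (1 / ((k:ℝ) + 1)) τ ξ * conj (𝓕 f ξ)‖ₑ ≤
      ∫⁻ x, ‖f x‖ₑ * ‖hEvol (1 / ((k:ℝ) + 1)) (𝓕 g) τ x‖ₑ := by
    intro k
    have hφ := integrable_gmul_mul (ε := 1 / ((k:ℝ) + 1)) (by positivity) τ hgg
    have h1 := fourier_adj hf hφ
    have h2 : ∫ ξ, 𝓕 g ξ * gmul (1 / ((k:ℝ) + 1)) τ ξ * conj (𝓕 f ξ) =
        conj (∫ x, f x * conj (hEvol (1 / ((k:ℝ) + 1)) (𝓕 g) τ x)) := by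
      have h3 : ∫ x, f x * conj (hEvol (1 / ((k:ℝ) + 1)) (𝓕 g) τ x) = _ := h1.symm
      rw [h3, ← integral_conj]
      congr 1
      ext ξ
      simp only [map_mul, Complex.conj_conj]
      ring
    rw [h2, ← ofReal_norm, RCLike.norm_conj, ofReal_norm]
    refine (enorm_integral_le_lintegral_enorm _).trans_eq (lintegral_congr fun x => ?_)
    rw [enorm_mul, ← ofReal_norm (conj _), RCLike.norm_conj, ofReal_norm]
  have heq : ∫ x, g x * conj (𝓕⁻ (fun ξ => gmul 0 (-τ) ξ * 𝓕 f ξ) x) =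
      ∫ ξ, 𝓕 g ξ * gmul 0 τ ξ * conj (𝓕 f ξ) := by
    rw [← fourier_adj hg hψ]
    congr 1
    ext ξ
    rw [map_mul, conj_gmul, neg_neg, mul_assoc]
  rw [heq, ← (Filter.Tendsto.liminf_eq ((continuous_enorm.tendsto _).comp hlim))]
  exact Filter.liminf_le_liminf (Filter.Eventually.of_forall hreg)

/-- Duality: a bound for the bilinear form gives the `L²` bound for the time integral of the
evolution. The integral is tested against its own truncations to sets where it is bounded, the
regularisation is removed with the lemma of Fatou, and the norm of the truncation is divided out. -/
theorem duality {F : ℝ → EuclideanSpace ℝ (Fin n) → ℂ} (hF : Measurable (Function.uncurry F))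
    (hi : ∀ τ, Integrable (F τ)) (hfi : ∀ τ, Integrable (𝓕 (F τ))) {B : ℝ≥0∞}
    (hB : ∀ (ε : ℝ) (φ : EuclideanSpace ℝ (Fin n) → ℂ), 0 < ε → MemLp φ 2 → Measurable φ →
      ∫⁻ τ, ∫⁻ x, ‖F τ x‖ₑ * ‖hEvol ε φ τ x‖ₑ ≤ B * (∫⁻ ξ, ‖φ ξ‖ₑ ^ 2) ^ (1 / 2 : ℝ)) :
    ∫⁻ x, ‖∫ τ, 𝓕⁻ (fun ξ => gmul 0 (-τ) ξ * 𝓕 (F τ) ξ) x‖ₑ ^ 2 ≤ B ^ 2 := by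
  obtain ⟨u, hu⟩ : ∃ u : ℝ → EuclideanSpace ℝ (Fin n) → ℂ,
    ∀ τ, u τ = 𝓕⁻ (fun ξ => gmul 0 (-τ) ξ * 𝓕 (F τ) ξ) := ⟨_, fun _ => rfl⟩
  simp_rw [← hu]
  have hum : Measurable (Function.uncurry u) := by
    have h1 : Measurable (Function.uncurry fun (τ : ℝ) (ξ : EuclideanSpace ℝ (Fin n)) =>
        gmul 0 (-τ) ξ * 𝓕 (F τ) ξ) := (measurable_gmul_neg 0).mul (measurable_fourier_param hF)
    have h2 := measurable_fourierInv_param h1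
    convert h2 using 1
    ext p
    simp only [Function.uncurry, hu]
  obtain ⟨v, hv⟩ : ∃ v : EuclideanSpace ℝ (Fin n) → ℂ, ∀ x, v x = ∫ τ, u τ x := ⟨_, fun _ => rfl⟩
  have hvm : Measurable v := by
    have h := (hum.comp measurable_swap).stronglyMeasurable.integral_prod_right
      (f := fun x τ => u τ x) (ν := (volume : Measure ℝ))
    convert h.measurable using 1
    ext x; exact hv x
  simp_rw [← hv]
  obtain ⟨J, hJ⟩ : ∃ J : EuclideanSpace ℝ (Fin n) → ℝ≥0∞, ∀ x, J x = ∫⁻ τ, ‖u τ x‖ₑ :=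
    ⟨_, fun _ => rfl⟩
  have hJm : Measurable J := by
    have h := (hum.comp measurable_swap).enorm.lintegral_prod_right' (ν := (volume : Measure ℝ))
    convert h using 1
    ext x; exact hJ x
  have hvJ : ∀ x, ‖v x‖ₑ ≤ J x := fun x => by
    rw [hv, hJ]; exact enorm_integral_le_lintegral_enorm _
  -- On `S N` the function `v` is bounded and the integral defining it converges absolutely, which
  -- justifies the use of Fubini and the division by `‖g‖₂` below.
  obtain ⟨S, hS⟩ : ∃ S : ℕ → Set (EuclideanSpace ℝ (Fin n)),
    ∀ N x, x ∈ S N ↔ ‖x‖ ≤ N ∧ J x ≤ N := ⟨fun N => {x | ‖x‖ ≤ N ∧ J x ≤ N}, fun _ _ => Iff.rfl⟩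
  have hSm : ∀ N, MeasurableSet (S N) := fun N => by
    convert (measurableSet_le measurable_norm measurable_const).inter
      (measurableSet_le hJm (measurable_const (a := (N:ℝ≥0∞)))) using 1
    ext x; exact hS N x
  have hSv : ∀ N, volume (S N) ≠ ∞ := fun N => by
    refine ((measure_mono fun x hx => ?_).trans_lt
      (measure_closedBall_lt_top (x := (0:EuclideanSpace ℝ (Fin n))) (r := N))).ne
    simpa using ((hS N x).1 hx).1
  have key : ∀ N : ℕ, ∫⁻ x, ‖(S N).indicator v x‖ₑ ^ 2 ≤ B ^ 2 := by
    intro N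
    obtain ⟨g, hg⟩ : ∃ g, g = (S N).indicator v := ⟨_, rfl⟩
    rw [← hg]
    have hgm : Measurable g := hg ▸ hvm.indicator (hSm N)
    have hgN : ∀ x, ‖g x‖ₑ ≤ (S N).indicator (fun _ => (N:ℝ≥0∞)) x := fun x => by
      by_cases hx : x ∈ S N
      · rw [hg, Set.indicator_of_mem hx, Set.indicator_of_mem hx]
        exact (hvJ x).trans ((hS N x).1 hx).2
      · rw [hg, Set.indicator_of_notMem hx, Set.indicator_of_notMem hx]; simp
    have hNfin : (N:ℝ≥0∞) ≠ ∞ := ENNReal.natCast_ne_top N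
    have hgi : Integrable g := by
      refine ⟨hgm.aestronglyMeasurable, (lintegral_mono hgN).trans_lt ?_⟩
      rw [lintegral_indicator (hSm N), setLIntegral_const]
      exact ENNReal.mul_lt_top hNfin.lt_top (hSv N).lt_top
    have hG : ∫⁻ x, ‖g x‖ₑ ^ 2 ≠ ∞ := by
      refine ((lintegral_mono (g := (S N).indicator fun _ => (N:ℝ≥0∞) ^ 2) fun x => ?_).trans_lt
        ?_).ne
      · refine (pow_le_pow_left' (hgN x) 2).trans ?_
        by_cases hx : x ∈ S N
        · simp [hx]
        · simp [hx]
      · rw [lintegral_indicator (hSm N), setLIntegral_const]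
        exact ENNReal.mul_lt_top (ENNReal.pow_lt_top hNfin.lt_top) (hSv N).lt_top
    have hgL : MemLp g 2 := memLp_two_of_lintegral hgm.aestronglyMeasurable hG
    have hpl := plancherel_le hgi
    have hghc := continuous_fourier hgi
    have hgh : MemLp (𝓕 g) 2 :=
      memLp_two_of_lintegral hghc.aestronglyMeasurable (hpl.trans_lt hG.lt_top).ne
    have hprod : Integrable (Function.uncurry fun (x : EuclideanSpace ℝ (Fin n)) (τ : ℝ) =>
        g x * conj (u τ x)) ((volume : Measure (EuclideanSpace ℝ (Fin n))).prod volume) := by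
      have hm : Measurable (Function.uncurry fun (x : EuclideanSpace ℝ (Fin n)) (τ : ℝ) =>
          g x * conj (u τ x)) := by
        have h1 : Measurable fun p : EuclideanSpace ℝ (Fin n) × ℝ => u p.2 p.1 :=
          hum.comp measurable_swap
        exact (hgm.comp measurable_fst).mul (Complex.continuous_conj.measurable.comp h1)
      refine ⟨hm.aestronglyMeasurable, ?_⟩
      rw [HasFiniteIntegral, lintegral_prod _ hm.enorm.aemeasurable]
      refine (lintegral_mono (g := (S N).indicator fun _ => (N:ℝ≥0∞) * N) fun x => ?_).trans_lt ?_
      · have h1 : ∀ τ, ‖g x * conj (u τ x)‖ₑ = ‖g x‖ₑ * ‖u τ x‖ₑ := fun τ => by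
          rw [enorm_mul, ← ofReal_norm (conj _), RCLike.norm_conj, ofReal_norm]
        have h2 : Measurable fun τ => ‖u τ x‖ₑ := (hum.of_uncurry_right (y := x)).enorm
        simp only [Function.uncurry, h1]
        rw [lintegral_const_mul _ h2, ← hJ]
        by_cases hx : x ∈ S N
        · have h3 := hgN x
          rw [Set.indicator_of_mem hx] at h3 ⊢
          exact mul_le_mul' h3 ((hS N x).1 hx).2
        · rw [Set.indicator_of_notMem hx, hg, Set.indicator_of_notMem hx]; simp
      · rw [lintegral_indicator (hSm N), setLIntegral_const]
        exact ENNReal.mul_lt_top (ENNReal.mul_lt_top hNfin.lt_top hNfin.lt_top) (hSv N).lt_top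
    have hself : ∫⁻ x, ‖g x‖ₑ ^ 2 = ‖∫ x, ∫ τ, g x * conj (u τ x)‖ₑ := by
      have h1 : ∀ x, ∫ τ, g x * conj (u τ x) = ((‖g x‖ ^ 2 : ℝ) : ℂ) := fun x => by
        rw [integral_const_mul, integral_conj, ← hv]
        by_cases hx : x ∈ S N
        · rw [hg, Set.indicator_of_mem hx, Complex.mul_conj']; push_cast; rfl
        · rw [hg, Set.indicator_of_notMem hx]; simp
      simp_rw [h1]
      rw [integral_complex_ofReal, ← ofReal_norm, Complex.norm_real,
        Real.norm_of_nonneg (integral_nonneg fun x => sq_nonneg _),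
        ofReal_integral_eq_lintegral_ofReal ((memLp_two_iff_integrable_sq_norm hgL.1).1 hgL)
          (Filter.Eventually.of_forall fun x => sq_nonneg _)]
      refine lintegral_congr fun x => ?_
      rw [ENNReal.ofReal_pow (norm_nonneg _), ofReal_norm]
    have hle : ∫⁻ x, ‖g x‖ₑ ^ 2 ≤ B * (∫⁻ x, ‖g x‖ₑ ^ 2) ^ (1 / 2 : ℝ) := by
      calc ∫⁻ x, ‖g x‖ₑ ^ 2 = ‖∫ τ, ∫ x, g x * conj (u τ x)‖ₑ := by
            rw [hself, integral_integral_swap hprod]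
        _ ≤ ∫⁻ τ, ‖∫ x, g x * conj (u τ x)‖ₑ := enorm_integral_le_lintegral_enorm _
        _ ≤ ∫⁻ τ, Filter.liminf (fun k : ℕ => ∫⁻ x, ‖F τ x‖ₑ *
              ‖hEvol (1 / ((k:ℝ) + 1)) (𝓕 g) τ x‖ₑ) Filter.atTop := by
            refine lintegral_mono fun τ => ?_
            rw [hu]
            exact pairing_le τ (hi τ) (hfi τ) hgi hgh
        _ ≤ Filter.liminf (fun k : ℕ => ∫⁻ τ, ∫⁻ x, ‖F τ x‖ₑ *
              ‖hEvol (1 / ((k:ℝ) + 1)) (𝓕 g) τ x‖ₑ) Filter.atTop := by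
            refine lintegral_liminf_le fun k => ?_
            exact (hF.enorm.mul (measurable_hEvol _ hghc.measurable).enorm).lintegral_prod_right'
        _ ≤ Filter.liminf (fun _ : ℕ => B * (∫⁻ x, ‖g x‖ₑ ^ 2) ^ (1 / 2 : ℝ)) Filter.atTop := by
            refine Filter.liminf_le_liminf (Filter.Eventually.of_forall fun k => ?_)
            refine (hB _ _ (by positivity) hgh hghc.measurable).trans ?_
            gcongr
        _ = _ := Filter.liminf_const _
    rcases eq_or_ne (∫⁻ x, ‖g x‖ₑ ^ 2) 0 with h0 | h0
    · rw [h0]; exact zero_le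
    · obtain ⟨Q, hQ⟩ : ∃ Q, Q = (∫⁻ x, ‖g x‖ₑ ^ 2) ^ (1 / 2 : ℝ) := ⟨_, rfl⟩
      have hQ2 : ∫⁻ x, ‖g x‖ₑ ^ 2 = Q * Q := by
        rw [hQ, ← ENNReal.rpow_add_of_nonneg _ _ (by norm_num) (by norm_num)]; norm_num
      have hQ0 : Q ≠ 0 := by rintro rfl; exact h0 (by simpa using hQ2)
      have hQt : Q ≠ ∞ := by rintro rfl; exact hG (by simpa using hQ2)
      rw [← hQ, hQ2] at hle
      have := (ENNReal.mul_le_mul_iff_left hQ0 hQt).1 hle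
      rw [hQ2, ← sq]
      exact pow_le_pow_left' this 2
  calc ∫⁻ x, ‖v x‖ₑ ^ 2 ≤ ∫⁻ x, Filter.liminf (fun N : ℕ => ‖(S N).indicator v x‖ₑ ^ 2)
        Filter.atTop := by
        refine lintegral_mono fun x => ?_
        rcases eq_or_ne (J x) ∞ with hx | hx
        · -- Where the time integral diverges, the Bochner integral is zero by convention.
          have : v x = 0 := by
            rw [hv]
            refine integral_undef fun h => ?_
            have := h.2
            rw [HasFiniteIntegral, ← hJ, hx] at this
            exact lt_irrefl _ this
          simp [this]
        · refine Filter.le_liminf_of_le (by isBoundedDefault) ?_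
          obtain ⟨N1, hN1⟩ := exists_nat_ge ‖x‖
          obtain ⟨N2, hN2⟩ := exists_nat_ge (J x).toReal
          filter_upwards [Filter.eventually_ge_atTop (max N1 N2)] with N hN
          have hmem : x ∈ S N := by
            refine (hS N x).2 ⟨hN1.trans (by exact_mod_cast (le_max_left _ _).trans hN), ?_⟩
            rw [← ENNReal.ofReal_toReal hx, ← ENNReal.ofReal_natCast]
            exact ENNReal.ofReal_le_ofReal
              (hN2.trans (by exact_mod_cast (le_max_right _ _).trans hN))
          rw [Set.indicator_of_mem hmem]
    _ ≤ Filter.liminf (fun N : ℕ => ∫⁻ x, ‖(S N).indicator v x‖ₑ ^ 2) Filter.atTop :=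
        lintegral_liminf_le fun N => (hvm.indicator (hSm N)).enorm.pow_const 2
    _ ≤ Filter.liminf (fun _ : ℕ => B ^ 2) Filter.atTop :=
        Filter.liminf_le_liminf (Filter.Eventually.of_forall key)
    _ = _ := Filter.liminf_const _

end Duality

/-! ### Exponents, and the conventions for divergent integrals -/

section Reduction

variable {n : ℕ}

/-- The exponents of an admissible pair are determined by the single parameter `θ = 2 / q̃`. -/
lemma exponents {n : ℕ} (hn : 3 ≤ n) {qt rt qt' rt' : ℝ≥0∞} (hq : 2 ≤ qt)
    (hadm : 2 / qt + n / rt = (n : ℝ≥0∞) / 2)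
    (hq' : 1 / qt' = 1 - 1 / qt) (hr' : 1 / rt' = 1 - 1 / rt) :
    ∃ θ : ℝ, 0 ≤ θ ∧ θ ≤ 1 ∧ qt' ≠ ∞ ∧ qt'.toReal = 1 / (1 - θ / 2) ∧
      1 / rt'.toReal = 1 / 2 + θ / n := by
  have hn3 : (3:ℝ) ≤ n := by exact_mod_cast hn
  simp only [div_eq_mul_inv, one_mul] at hadm hq' hr'
  have hqi : qt⁻¹ ≤ 2⁻¹ := ENNReal.inv_le_inv.2 hq
  have hqf : qt⁻¹ ≠ ∞ := (hqi.trans_lt (by simp)).ne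
  have hqr : qt⁻¹.toReal ≤ 1 / 2 := by
    have := ENNReal.toReal_mono (by simp) hqi
    simpa using this
  have hq0 : 0 ≤ qt⁻¹.toReal := ENNReal.toReal_nonneg
  have hn0 : (n:ℝ≥0∞) ≠ 0 := by
    have : n ≠ 0 := by omega
    exact_mod_cast this
  have hrf : rt⁻¹ ≠ ∞ := by
    intro h
    rw [h, ENNReal.mul_top hn0, add_top] at hadm
    exact ENNReal.mul_ne_top (ENNReal.natCast_ne_top n) (by simp) hadm.symm
  have hadmR : 2 * qt⁻¹.toReal + n * rt⁻¹.toReal = n * 2⁻¹ := by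
    have := congrArg ENNReal.toReal hadm
    rw [ENNReal.toReal_add (ENNReal.mul_ne_top (by simp) hqf)
      (ENNReal.mul_ne_top (ENNReal.natCast_ne_top n) hrf), ENNReal.toReal_mul, ENNReal.toReal_mul,
      ENNReal.toReal_mul, ENNReal.toReal_inv 2] at this
    simpa using this
  have hrle : rt⁻¹.toReal ≤ 1 := by nlinarith
  have hqR : qt'.toReal⁻¹ = 1 - qt⁻¹.toReal := by
    rw [← ENNReal.toReal_inv, hq', ENNReal.toReal_sub_of_le (hqi.trans (by simp)) (by simp)]
    simp
  have hrR : rt'.toReal⁻¹ = 1 - rt⁻¹.toReal := by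
    rw [← ENNReal.toReal_inv, hr', ENNReal.toReal_sub_of_le _ (by simp)]
    · simp
    · rw [← ENNReal.ofReal_toReal hrf]
      exact ENNReal.ofReal_le_one.2 hrle
  refine ⟨2 * qt⁻¹.toReal, by positivity, by linarith, ?_, ?_, ?_⟩
  · rintro rfl
    rw [ENNReal.toReal_top, inv_zero] at hqR
    linarith
  · rw [← inv_inv qt'.toReal, hqR, one_div]
    congr 1
    ring
  · rw [one_div, hrR]
    field_simp
    nlinarith

lemma lorentz_two (p : ℝ) (f : EuclideanSpace ℝ (Fin n) → ℂ) :
    lorentz p 2 f = lorSq (1 / p) f ^ (1 / 2 : ℝ) := by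
  simp [lorentz, lorSq]

lemma lorSq_zero (a : ℝ) : lorSq a (0 : EuclideanSpace ℝ (Fin n) → ℂ) = 0 := by
  have hr : ∀ t, rearr (0 : EuclideanSpace ℝ (Fin n) → ℂ) t = 0 := fun t => by
    refine le_antisymm (le_of_forall_pos_le_add fun e he => ?_) (rearr_nonneg t)
    rw [zero_add]
    refine rearr_le he ?_
    have : {x : EuclideanSpace ℝ (Fin n) | e < ‖(0 : EuclideanSpace ℝ (Fin n) → ℂ) x‖} = ∅ := by
      ext x; simpa using he.le
    rw [distFn, this]; simp
  simp [lorSq, hr]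

lemma fourier_zero_fun : 𝓕 (0 : EuclideanSpace ℝ (Fin n) → ℂ) = 0 := by
  ext ξ; rw [Real.fourier_eq]; simp

lemma fourier_undef {f : EuclideanSpace ℝ (Fin n) → ℂ} (hf : ¬ Integrable f) : 𝓕 f = 0 := by
  ext ξ
  rw [Real.fourier_eq, Pi.zero_apply]
  exact integral_undef (by rwa [Real.fourierIntegral_convergent_iff])

lemma schrod_eq (τ : ℝ) (f : EuclideanSpace ℝ (Fin n) → ℂ) :
    schrod (-τ) f = 𝓕⁻ (fun ξ => gmul 0 (-τ) ξ * 𝓕 f ξ) := by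
  unfold schrod gmul
  congr 1
  ext ξ
  congr 2
  push_cast
  ring

lemma schrod_zero (τ : ℝ) : schrod (-τ) (0 : EuclideanSpace ℝ (Fin n) → ℂ) = 0 := by
  rw [schrod_eq, fourier_zero_fun]
  ext x
  rw [Real.fourierInv_eq]
  simp

/-- With the total conventions for the Fourier integrals, the propagator vanishes unless both the
function and its Fourier transform are integrable. -/
lemma schrod_undef (τ : ℝ) {f : EuclideanSpace ℝ (Fin n) → ℂ}
    (h : ¬ (Integrable f ∧ Integrable (𝓕 f))) : schrod (-τ) f = 0 := by
  by_cases hf : Integrable f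
  · have hff : ¬ Integrable (𝓕 f) := fun h' => h ⟨hf, h'⟩
    have hψ : ¬ Integrable fun ξ => gmul 0 (-τ) ξ * 𝓕 f ξ := fun h' => by
      apply hff
      refine h'.mono (continuous_fourier hf).aestronglyMeasurable
        (Filter.Eventually.of_forall fun ξ => ?_)
      rw [norm_mul, norm_gmul]
      simp
    rw [schrod_eq]
    ext x
    rw [Real.fourierInv_eq_fourier_neg, fourier_undef hψ]
    rfl
  · have : schrod (-τ) f = schrod (-τ) 0 := by
      rw [schrod_eq, schrod_eq, fourier_undef hf, fourier_zero_fun]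
    rw [this, schrod_zero]

end Reduction

/-- Dual Strichartz estimate in Lorentz spaces (Keel–Tao). -/
theorem strichartz_dual (n : ℕ) (hn : 3 ≤ n) (qt rt : ℝ≥0∞)
    (hq : 2 ≤ qt) (hr : 2 ≤ rt) (hr2 : rt ≤ 2 * n / ((n : ℝ≥0∞) - 2))
    (hadm : 2 / qt + n / rt = (n : ℝ≥0∞) / 2)
    (qt' rt' : ℝ≥0∞) (hq' : 1 / qt' = 1 - 1 / qt) (hr' : 1 / rt' = 1 - 1 / rt) :
    ∃ C > 0, ∀ F : ℝ → EuclideanSpace ℝ (Fin n) → ℂ,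
      Measurable (Function.uncurry F) →
      eLpNorm (fun x => ∫ τ : ℝ, schrod (-τ) (F τ) x) 2 volume ≤
        ENNReal.ofReal C * timeLp qt' Set.univ (fun τ => lorentz rt'.toReal 2 (F τ)) := by
  obtain ⟨θ, hθ0, hθ1, hqt, hqR, hrR⟩ := exponents hn hq hadm hq' hr'
  obtain ⟨K, hK, hform⟩ := dual_form hn hθ0 hθ1
  refine ⟨K + 1, by linarith, fun F hF => ?_⟩
  have hgood : MeasurableSet {τ | Integrable (F τ) ∧ Integrable (𝓕 (F τ))} :=
    (measurableSet_integrable hF.stronglyMeasurable).inter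
      (measurableSet_integrable (measurable_fourier_param hF).stronglyMeasurable)
  classical
  -- Times at which the propagator is zero by convention are discarded.
  obtain ⟨F', hF'⟩ : ∃ F' : ℝ → EuclideanSpace ℝ (Fin n) → ℂ, ∀ τ,
    F' τ = if Integrable (F τ) ∧ Integrable (𝓕 (F τ)) then F τ else 0 := ⟨_, fun _ => rfl⟩
  have hF'm : Measurable (Function.uncurry F') := by
    have := hF.indicator (measurable_fst (β := EuclideanSpace ℝ (Fin n)) hgood)
    convert this using 1
    ext p
    by_cases h : Integrable (F p.1) ∧ Integrable (𝓕 (F p.1))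
    · rw [Set.indicator_of_mem (by exact h)]
      simp only [Function.uncurry, hF', if_pos h]
    · rw [Set.indicator_of_notMem (by exact h)]
      simp only [Function.uncurry, hF', if_neg h, Pi.zero_apply]
  have hi : ∀ τ, Integrable (F' τ) ∧ Integrable (𝓕 (F' τ)) := fun τ => by
    rw [hF']
    split_ifs with h
    · exact h
    · rw [fourier_zero_fun]
      exact ⟨integrable_zero _ _ _, integrable_zero _ _ _⟩
  have hS : ∀ τ, schrod (-τ) (F τ) = 𝓕⁻ (fun ξ => gmul 0 (-τ) ξ * 𝓕 (F' τ) ξ) := fun τ => by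
    rw [← schrod_eq, hF']
    split_ifs with h
    · rfl
    · rw [schrod_undef τ h, schrod_zero]
  have hL : ∀ τ, lorSq (1 / 2 + θ / n) (F' τ) ≤ lorSq (1 / 2 + θ / n) (F τ) := fun τ => by
    rw [hF']
    split_ifs with h
    · exact le_rfl
    · rw [lorSq_zero]; exact zero_le
  have hb : 0 < 1 - θ / 2 := by linarith
  have htime : timeLp qt' Set.univ (fun τ => lorentz rt'.toReal 2 (F τ)) =
      (∫⁻ τ, lorSq (1 / 2 + θ / n) (F τ) ^ (1 / 2 * (1 / (1 - θ / 2)))) ^ (1 - θ / 2) := by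
    rw [timeLp, if_neg hqt, hqR, one_div_one_div, Measure.restrict_univ]
    simp_rw [lorentz_two, hrR, ← ENNReal.rpow_mul]
  have hd := duality hF'm (fun τ => (hi τ).1) (fun τ => (hi τ).2)
    fun ε φ hε hφ hφm => hform ε F' φ hε hF'm (fun τ => (hi τ).1) hφ hφm
  simp_rw [hS]
  rw [eLpNorm_eq_lintegral_rpow_enorm_toReal (by simp) (by simp), htime]
  simp only [ENNReal.toReal_ofNat, ENNReal.rpow_ofNat]
  refine (ENNReal.rpow_le_rpow hd (by norm_num)).trans ?_
  rw [← ENNReal.rpow_natCast, ← ENNReal.rpow_mul]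
  norm_num only
  rw [ENNReal.rpow_one]
  gcongr with τ
  · linarith
  · exact hL τ
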